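/- arXiv:2403.03912 — 4 statements merged into one kernel-verified Lean document; each statement's English description precedes it below -/
import Mathlib

section
/- Let b ≥ 2 be an integer and E a nonempty set of base-b digits. Then K(b,E) = (b/#E)·log(b) + (1/b)·∫_{[0,1)} Σ_{a∈E1} (ψ((a+x)/b) − ψ(1)) dμ_{b,E}(x). -/
open MeasureTheory Real ENNReal

/-- The digamma function `ψ(x) = d/dx log Γ(x)`. -/
noncomputable def digamma (x : ℝ) : ℝ := deriv (fun y => Real.log (Real.Gamma y)) x

/-- The Kempner sum `K(b,E)`: sum of reciprocals of positive integers whose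
base-`b` digits all avoid the excluded set `E`. -/
noncomputable def kempnerSum (b : ℕ) (E : Finset ℕ) : ℝ :=
  ∑' n : ℕ, if n ≠ 0 ∧ ∀ d ∈ Nat.digits b n, d ∉ E then (n : ℝ)⁻¹ else 0

/-- The measure `μ_{b,E}` on `[0,1)`: the sum, over all finite strings of admissible
digits (digits `< b` not in `E`), of the weighted Dirac mass `b^{-l} δ_{n(X)/b^l}`. -/
noncomputable def kempnerMeasure (b : ℕ) (E : Finset ℕ) : Measure ℝ :=
  Measure.sum (fun X : {l : List ℕ // ∀ d ∈ l, d < b ∧ d ∉ E} =>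
    ((b : ℝ≥0∞) ^ X.1.length)⁻¹ •
      Measure.dirac (((Nat.ofDigits b X.1 : ℕ) : ℝ) / (b : ℝ) ^ X.1.length))

/-- `E₁ = E` if `0 ∉ E`, and `E₁ = (E ∪ {b}) \ {0}` if `0 ∈ E`. -/
def Eone (b : ℕ) (E : Finset ℕ) : Finset ℕ :=
  if 0 ∈ E then insert b (E.erase 0) else E

lemma dg_hasDeriv {x : ℝ} (hx : 0 < x) :
    HasDerivAt (fun y => Real.log (Real.Gamma y)) (digamma x) x := by
  have h1 : DifferentiableAt ℝ Real.Gamma x := Real.differentiableAt_Gamma (fun m => by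
    have : (0:ℝ) ≤ m := Nat.cast_nonneg m
    linarith)
  exact (h1.log (Real.Gamma_pos_of_pos hx).ne').hasDerivAt

lemma logGamma_add_one {x : ℝ} (hx : 0 < x) :
    Real.log (Real.Gamma (x + 1)) = Real.log x + Real.log (Real.Gamma x) := by
  rw [Real.Gamma_add_one hx.ne', Real.log_mul hx.ne' (Real.Gamma_pos_of_pos hx).ne']

lemma dg_add_one {x : ℝ} (hx : 0 < x) : digamma (x + 1) = digamma x + 1 / x := by
  have h1 := (dg_hasDeriv (show 0 < x + 1 by linarith)).comp_add_const x 1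
  have h2 := (Real.hasDerivAt_log hx.ne').add (dg_hasDeriv hx)
  have h3 : (fun y => Real.log (Real.Gamma (y + 1))) =ᶠ[nhds x]
      (Real.log + fun y => Real.log (Real.Gamma y)) := by
    filter_upwards [lt_mem_nhds hx] with y hy
    simpa using logGamma_add_one hy
  have := (h2.congr_of_eventuallyEq h3).unique h1
  rw [← this, one_div, add_comm]

lemma dg_mono {x y : ℝ} (hx : 0 < x) (hxy : x ≤ y) : digamma x ≤ digamma y := by
  rcases hxy.eq_or_lt with rfl | h
  · exact le_rfl
  have hy : 0 < y := hx.trans h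
  exact (Real.convexOn_log_Gamma.le_slope_of_hasDerivAt (Set.mem_Ioi.2 hx) (Set.mem_Ioi.2 hy) h
    (dg_hasDeriv hx)).trans
    (Real.convexOn_log_Gamma.slope_le_of_hasDerivAt (Set.mem_Ioi.2 hx) (Set.mem_Ioi.2 hy) h
    (dg_hasDeriv hy))

lemma dg_le_log {x : ℝ} (hx : 0 < x) : digamma x ≤ Real.log x := by
  have := Real.convexOn_log_Gamma.le_slope_of_hasDerivAt (Set.mem_Ioi.2 hx)
    (Set.mem_Ioi.2 (show 0 < x + 1 by linarith)) (by linarith) (dg_hasDeriv hx)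
  simpa [slope_def_field, logGamma_add_one hx] using this

lemma log_le_dg {x : ℝ} (hx : 0 < x) : Real.log x - 1 / x ≤ digamma x := by
  have := Real.convexOn_log_Gamma.slope_le_of_hasDerivAt (Set.mem_Ioi.2 hx)
    (Set.mem_Ioi.2 (show 0 < x + 1 by linarith)) (by linarith) 
      (dg_hasDeriv (show 0 < x + 1 by linarith))
  rw [dg_add_one hx] at this
  have h2 : Real.log x ≤ digamma x + 1 / x := by
    simpa [slope_def_field, logGamma_add_one hx] using this
  linarith

lemma dg_sub_log_tendsto :
    Filter.Tendsto (fun x : ℝ => digamma x - Real.log x) Filter.atTop (nhds 0) := by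
  have h : Filter.Tendsto (fun x : ℝ => -(1 / x)) Filter.atTop (nhds 0) := by
    simpa using (tendsto_inv_atTop_zero (𝕜 := ℝ)).neg
  refine tendsto_of_tendsto_of_tendsto_of_le_of_le' h tendsto_const_nhds ?_ ?_
  · filter_upwards [Filter.eventually_gt_atTop 0] with x hx
    linarith [log_le_dg hx]
  · filter_upwards [Filter.eventually_gt_atTop 0] with x hx
    linarith [dg_le_log hx]

lemma dg_mul (b : ℕ) (hb : 2 ≤ b) {y : ℝ} (hy : 0 < y) :
    ∑ a ∈ Finset.range b, digamma ((a + y) / b) = b * digamma y - b * Real.log b := by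
  have hb0 : (0:ℝ) < b := by exact_mod_cast (by omega : 0 < b)
  set F : ℝ → ℝ := fun y => ∑ a ∈ Finset.range b, digamma ((a + y) / b) - b * digamma y with hF
  have hstep : ∀ y, 0 < y → F (y + 1) = F y := by
    intro y hy
    have e1 := Finset.sum_range_succ (fun a : ℕ => digamma ((a + y) / b)) b
    rw [Finset.sum_range_succ'] at e1
    have e2 : digamma (((b:ℕ) + y) / b) = digamma (y / b) + b / y := by
      rw [show ((b:ℝ) + y) / b = y / b + 1 by field_simp; ring, dg_add_one (by positivity)]
      simp
    have e3 : ∀ a : ℕ, ((a + 1 : ℕ) : ℝ) + y = a + (y + 1) := by intro a; push_cast; ring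
    simp only [e3, e2, Nat.cast_zero, zero_add] at e1
    simp only [hF, dg_add_one hy]
    have : (b:ℝ) * (digamma y + 1 / y) = b * digamma y + b / y := by ring
    linarith
  have hn : ∀ n : ℕ, F (y + n) = F y := by
    intro n
    induction n with
    | zero => simp
    | succ n ih => rw [← ih, Nat.cast_succ, ← add_assoc, hstep _ (by positivity)]
  have hlim : Filter.Tendsto F Filter.atTop (nhds (-(b * Real.log b))) := by
    have hG : Filter.Tendsto (fun y : ℝ => ∑ a ∈ Finset.range b,
        ((digamma ((a + y) / b) - Real.log ((a + y) / b)) + (Real.log (y + a) - Real.log y)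
          - (digamma y - Real.log y) - Real.log b)) Filter.atTop
        (nhds (∑ a ∈ Finset.range b, ((0:ℝ) + 0 - 0 - Real.log b))) := by
      refine tendsto_finsetSum _ fun a _ => ?_
      refine Filter.Tendsto.sub (Filter.Tendsto.sub (Filter.Tendsto.add ?_ ?_) dg_sub_log_tendsto)
        tendsto_const_nhds
      · exact dg_sub_log_tendsto.comp ((Filter.tendsto_atTop_add_const_left _ _
          Filter.tendsto_id).atTop_div_const hb0)
      · exact Real.tendsto_log_comp_add_sub_log a
    have e : ∑ a ∈ Finset.range b, ((0:ℝ) + 0 - 0 - Real.log b) = -(b * Real.log b) := by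
      simp
    rw [e] at hG
    refine hG.congr' ?_
    filter_upwards [Filter.eventually_gt_atTop 0] with y hy
    simp only [hF]
    have : (b:ℝ) * digamma y = ∑ a ∈ Finset.range b, digamma y := by simp
    rw [this, ← Finset.sum_sub_distrib]
    refine Finset.sum_congr rfl fun a _ => ?_
    rw [Real.log_div (by positivity) hb0.ne', add_comm y]
    ring
  have h2 : Filter.Tendsto (fun n : ℕ => F (y + n)) Filter.atTop (nhds (-(b * Real.log b))) :=
    hlim.comp (Filter.tendsto_atTop_add_const_left _ _ tendsto_natCast_atTop_atTop)
  simp only [hn] at h2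
  have := tendsto_nhds_unique tendsto_const_nhds h2
  simp only [hF] at this
  linarith

/-- Admissible digits. -/
abbrev Dg (b : ℕ) (E : Finset ℕ) : Type := {d : ℕ // d ∈ Finset.range b \ E}

/-- The integer with big-endian digit string `l`. -/
def nv {b : ℕ} {E : Finset ℕ} (l : List (Dg b E)) : ℕ :=
  Nat.ofDigits b (l.map Subtype.val).reverse

/-- The fractional value of the digit string. -/
noncomputable def xv {b : ℕ} {E : Finset ℕ} (l : List (Dg b E)) : ℝ :=
  (nv l : ℝ) / (b : ℝ) ^ l.length

/-- The weight of the digit string. -/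
noncomputable def wt {b : ℕ} {E : Finset ℕ} (l : List (Dg b E)) : ℝ :=
  ((b : ℝ) ^ l.length)⁻¹

section aux
variable {b : ℕ} {E : Finset ℕ}

lemma Dg_lt (d : Dg b E) : d.1 < b := by
  have := d.2; simp only [Finset.mem_sdiff, Finset.mem_range] at this; exact this.1

lemma Dg_notMem (d : Dg b E) : d.1 ∉ E := by
  have := d.2; simp only [Finset.mem_sdiff, Finset.mem_range] at this; exact this.2

lemma nv_cons (d : Dg b E) (l : List (Dg b E)) : nv (d :: l) = d.1 * b ^ l.length + nv l := by
  simp [nv, Nat.ofDigits_append]; ring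

lemma xv_nil : xv ([] : List (Dg b E)) = 0 := by simp [xv, nv]

lemma xv_cons (hb : 2 ≤ b) (d : Dg b E) (l : List (Dg b E)) :
    xv (d :: l) = ((d.1 : ℝ) + xv l) / b := by
  have hb0 : (0:ℝ) < b := by exact_mod_cast (by omega : 0 < b)
  simp only [xv, nv_cons, List.length_cons]
  push_cast
  field_simp
  ring

lemma wt_cons (d : Dg b E) (l : List (Dg b E)) :
    wt (d :: l) = wt l / b := by
  simp only [wt, List.length_cons, pow_succ, mul_inv]; ring

lemma wt_nonneg (l : List (Dg b E)) : 0 ≤ wt l := by unfold wt; positivity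

lemma xv_nonneg (l : List (Dg b E)) : 0 ≤ xv l := by unfold xv; positivity

lemma xv_lt_one (hb : 2 ≤ b) (l : List (Dg b E)) : xv l < 1 := by
  have hb0 : (0:ℝ) < b := by exact_mod_cast (by omega : 0 < b)
  unfold xv
  rw [div_lt_one (by positivity)]
  have := Nat.ofDigits_lt_base_pow_length (b := b) (l := (l.map Subtype.val).reverse) (by omega)
    (by
      intro x hx
      simp only [List.mem_reverse, List.mem_map] at hx
      obtain ⟨d, -, rfl⟩ := hx
      exact Dg_lt d)
  simp only [List.length_reverse, List.length_map] at this
  unfold nv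
  exact_mod_cast this

lemma card_Dg (hEsub : ∀ d ∈ E, d < b) : (Fintype.card (Dg b E) : ℝ) = b - E.card := by
  rw [Fintype.card_coe, Finset.card_sdiff_of_subset (fun d hd => Finset.mem_range.2 (hEsub d hd)),
    Finset.card_range, Nat.cast_sub]
  simpa using Finset.card_le_card (fun d hd => Finset.mem_range.2 (hEsub d hd) : E ⊆ Finset.range b)

lemma wt_summable (hb : 2 ≤ b) (hE : E.Nonempty) (hEsub : ∀ d ∈ E, d < b) :
    Summable (wt : List (Dg b E) → ℝ) := by
  have hb0 : (0:ℝ) < b := by exact_mod_cast (by omega : 0 < b)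
  rw [← (Equiv.sigmaFiberEquiv (List.length : List (Dg b E) → ℕ)).summable_iff]
  have : ∀ n : ℕ, Fintype {l : List (Dg b E) // l.length = n} :=
    fun n => inferInstanceAs (Fintype (List.Vector (Dg b E) n))
  refine (summable_sigma_of_nonneg (fun p => wt_nonneg _)).2 ⟨fun n => Summable.of_finite, ?_⟩
  have : ∀ n : ℕ, ∑' (y : {l : List (Dg b E) // l.length = n}),
      ((wt : List (Dg b E) → ℝ) ∘ (Equiv.sigmaFiberEquiv List.length)) ⟨n, y⟩
      = ((Fintype.card (Dg b E) : ℝ) / b) ^ n := by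
    intro n
    have e : ∀ y : {l : List (Dg b E) // l.length = n},
      ((wt : List (Dg b E) → ℝ) ∘ (Equiv.sigmaFiberEquiv List.length)) ⟨n, y⟩
        = ((b:ℝ) ^ n)⁻¹ := by
      rintro ⟨l, hl⟩
      simp [wt, hl]
    simp only [e]
    rw [tsum_fintype, Finset.sum_const, Finset.card_univ]
    have hc : Fintype.card {l : List (Dg b E) // l.length = n} = Fintype.card (Dg b E) ^ n := by
      rw [← card_vector n]
      exact Fintype.card_congr (Equiv.refl _)
    rw [hc, nsmul_eq_mul, div_pow]
    push_cast
    ring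
  refine (summable_congr this).2 ?_
  refine summable_geometric_of_lt_one (by positivity) ?_
  rw [div_lt_one hb0, card_Dg hEsub]
  have : (0:ℝ) < E.card := by exact_mod_cast hE.card_pos
  linarith

/-- Strings are empty or have a leading digit. -/
def listEquiv (α : Type) : List α ≃ Option (α × List α) where
  toFun l := match l with
    | [] => none
    | a :: l => some (a, l)
  invFun o := match o with
    | none => []
    | some (a, l) => a :: l
  left_inv l := by cases l <;> rfl
  right_inv o := by rcases o with _ | ⟨a, l⟩ <;> rfl

lemma tsum_list {α : Type} [Fintype α] (f : List α → ℝ) (hf : Summable f) :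
    ∑' l, f l = f [] + ∑ a, ∑' l, f (a :: l) := by
  classical
  have h1 : Summable (f ∘ (listEquiv α).symm) := (listEquiv α).symm.summable_iff.2 hf
  rw [← (listEquiv α).symm.tsum_eq f]
  have hs : Summable (fun p : α × List α => f (p.1 :: p.2)) :=
    h1.comp_injective (Option.some_injective _)
  have h2 : HasSum (fun p : α × List α => f (p.1 :: p.2)) (∑ a, ∑' l, f (a :: l)) := by
    have := hs.hasSum
    rwa [hs.tsum_prod, tsum_fintype] at this
  have h4 := h1.tsum_eq_add_tsum_ite none
  have h5 : ∑' o, (if o = none then 0 else (f ∘ (listEquiv α).symm) o)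
      = ∑ a, ∑' l, f (a :: l) := by
    rw [← h2.tsum_eq, ← (Option.some_injective (α × List α)).tsum_eq]
    · exact tsum_congr fun p => by simp [listEquiv]
    · intro o ho
      cases o with
      | none => simp at ho
      | some p => exact ⟨p, rfl⟩
  rw [← h5]
  refine h4.trans ?_
  refine congrArg₂ (· + ·) rfl (tsum_congr fun o => ?_)
  cases o <;> simp

lemma bdd_summable (hb : 2 ≤ b) (hE : E.Nonempty) (hEsub : ∀ d ∈ E, d < b) (f : List (Dg b E) → ℝ)
    (C : ℝ) (hf : ∀ l, |f l| ≤ C) : Summable (fun l => wt l * f l) := by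
  refine Summable.of_norm_bounded ((wt_summable hb hE hEsub).mul_right C) fun l => ?_
  rw [Real.norm_eq_abs, abs_mul, abs_of_nonneg (wt_nonneg l)]
  exact mul_le_mul_of_nonneg_left (hf l) (wt_nonneg l)

lemma wt_tsum (hb : 2 ≤ b) (hE : E.Nonempty) (hEsub : ∀ d ∈ E, d < b) :
    ∑' l : List (Dg b E), wt l = b / E.card := by
  have hb0 : (0:ℝ) < b := by exact_mod_cast (by omega : 0 < b)
  have hc : (0:ℝ) < E.card := by exact_mod_cast hE.card_pos
  have h := tsum_list _ (wt_summable hb hE hEsub)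
  simp only [wt_cons, tsum_div_const, Finset.sum_const, Finset.card_univ, nsmul_eq_mul] at h
  rw [card_Dg hEsub] at h
  have h0 : wt ([] : List (Dg b E)) = 1 := by simp [wt]
  rw [h0] at h
  field_simp at h ⊢
  linarith

/-- Reindexing of the strings. -/
def toStr (l : List (Dg b E)) : {l : List ℕ // ∀ d ∈ l, d < b ∧ d ∉ E} :=
  ⟨(l.map Subtype.val).reverse, by
    intro x hx
    simp only [List.mem_reverse, List.mem_map] at hx
    obtain ⟨d, -, rfl⟩ := hx
    exact ⟨Dg_lt d, Dg_notMem d⟩⟩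

lemma toStr_bij : Function.Bijective (toStr : List (Dg b E) → _) := by
  constructor
  · intro l m h
    have := congrArg Subtype.val h
    simp only [toStr, List.reverse_inj] at this
    exact List.map_injective_iff.2 Subtype.val_injective this
  · rintro ⟨l, hl⟩
    have : ∃ m : List (Dg b E), m.map Subtype.val = l.reverse := by
      refine ⟨l.reverse.attachWith (fun d => d ∈ Finset.range b \ E) ?_, ?_⟩
      · intro x hx
        have := hl x (by simpa using hx)
        simp [this]
      · simp
    obtain ⟨m, hm⟩ := this
    exact ⟨m, Subtype.ext (by simp [toStr, hm])⟩

lemma kempner_integral (hb : 2 ≤ b) (f : ℝ → ℝ) :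
    ∫ x in Set.Ico (0 : ℝ) 1, f x ∂(kempnerMeasure b E)
      = ∑' l : List (Dg b E), wt l * f (xv l) := by
  have hb0 : (b : ℝ≥0∞) ≠ 0 := by
    have : b ≠ 0 := by omega
    exact_mod_cast this
  have hx : ∀ l : List (Dg b E), (((Nat.ofDigits b (toStr l).1 : ℕ) : ℝ) /
      (b : ℝ) ^ (toStr l).1.length) = xv l := by
    intro l; simp [toStr, xv, nv]
  have hr : (kempnerMeasure b E).restrict (Set.Ico 0 1) = kempnerMeasure b E := by
    apply Measure.restrict_eq_self_of_ae_mem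
    unfold kempnerMeasure
    refine (Measure.ae_sum_iff' (p := fun x => x ∈ Set.Ico (0:ℝ) 1) measurableSet_Ico).2 ?_
    intro X
    obtain ⟨l, rfl⟩ := toStr_bij.2 X
    rw [hx]
    refine Measure.ae_smul_measure ?_ _
    refine (ae_dirac_iff (p := fun x => x ∈ Set.Ico (0:ℝ) 1) measurableSet_Ico).2 ?_
    exact ⟨xv_nonneg l, xv_lt_one hb l⟩
  rw [hr]
  unfold kempnerMeasure
  rw [integral_sum_dirac (fun X => by simp [hb0])]
  rw [← (Equiv.ofBijective _ toStr_bij).tsum_eq]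
  refine tsum_congr fun l => ?_
  simp only [Equiv.ofBijective_apply, hx, smul_eq_mul]
  congr 1
  simp [toStr, wt]

lemma digits_nv (hb : 2 ≤ b) (d : Dg b E) (hd : d.1 ≠ 0) (l : List (Dg b E)) :
    Nat.digits b (nv (d :: l)) = (toStr (d :: l)).1 := by
  unfold nv
  rw [Nat.digits_ofDigits b (by omega)]
  · rfl
  · exact fun x hx => ((toStr (d :: l)).2 x hx).1
  · intro h
    simpa using hd

lemma kempner_sum_eq (hb : 2 ≤ b) (hE : E.Nonempty) (hEsub : ∀ d ∈ E, d < b) :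
    kempnerSum b E = ∑' l : List (Dg b E), wt l *
      ∑ a : Dg b E, (if a.1 = 0 then 0 else 1 / ((a.1 : ℝ) + xv l)) := by
  have hb0 : (0:ℝ) < b := by exact_mod_cast (by omega : 0 < b)
  have hbd : ∀ (a : Dg b E) (l : List (Dg b E)),
      |(if a.1 = 0 then 0 else 1 / ((a.1 : ℝ) + xv l))| ≤ 1 := by
    intro a l
    split_ifs with h
    · simp
    · have h1 : (1:ℝ) ≤ a.1 := by exact_mod_cast (by omega : 1 ≤ a.1)
      have h2 := xv_nonneg l
      rw [abs_of_nonneg (by positivity), div_le_one (by positivity)]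
      linarith
  have hsum : ∀ a : Dg b E, Summable (fun l : List (Dg b E) =>
      wt l * (if a.1 = 0 then 0 else 1 / ((a.1 : ℝ) + xv l))) :=
    fun a => bdd_summable hb hE hEsub _ 1 (hbd a)
  simp only [Finset.mul_sum]
  rw [Summable.tsum_finsetSum (fun a _ => hsum a)]
  have hs2 : Summable (fun p : Dg b E × List (Dg b E) =>
      wt p.2 * (if p.1.1 = 0 then 0 else 1 / ((p.1.1 : ℝ) + xv p.2))) := by
    rw [← (Equiv.prodComm _ _).summable_iff]
    have hN : Summable (fun p : List (Dg b E) × Dg b E => wt p.1 * 1) := by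
      simp only [mul_one]
      have := (wt_summable (E := E) hb hE hEsub).mul_of_nonneg
        (Summable.of_finite (f := fun _ : Dg b E => (1:ℝ))) wt_nonneg (fun _ => zero_le_one)
      simpa using this
    refine Summable.of_norm_bounded hN fun p => ?_
    simp only [Function.comp, Equiv.prodComm_apply, Prod.fst_swap, Prod.snd_swap]
    rw [Real.norm_eq_abs, abs_mul, abs_of_nonneg (wt_nonneg _)]
    exact mul_le_mul_of_nonneg_left (hbd _ _) (wt_nonneg _)
  rw [← tsum_fintype (f := fun a : Dg b E => ∑' l : List (Dg b E),
      wt l * (if a.1 = 0 then 0 else 1 / ((a.1 : ℝ) + xv l))) (L := .unconditional _)]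
  rw [← hs2.tsum_prod]
  unfold kempnerSum
  set S : Set (Dg b E × List (Dg b E)) := {p | p.1.1 ≠ 0} with hS
  have hinj : Function.Injective (fun p : S => nv (p.1.1 :: p.1.2)) := by
    rintro ⟨⟨a, l⟩, h⟩ ⟨⟨a', l'⟩, h'⟩ heq
    have e := congrArg (Nat.digits b) heq
    simp only at e
    rw [digits_nv hb a h, digits_nv hb a' h'] at e
    have := toStr_bij.1 (Subtype.ext e)
    simp only [List.cons.injEq] at this
    obtain ⟨rfl, rfl⟩ := this
    rfl
  rw [← hinj.tsum_eq]
  · have hsub : Function.support (fun p : Dg b E × List (Dg b E) =>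
      wt p.2 * (if p.1.1 = 0 then 0 else 1 / ((p.1.1 : ℝ) + xv p.2))) ⊆ S := by
      intro p hp
      simp only [Function.mem_support] at hp
      intro h0
      simp [h0] at hp
    rw [← tsum_subtype_eq_of_support_subset hsub]
    refine tsum_congr ?_
    rintro ⟨⟨a, l⟩, h⟩
    have h' : a.1 ≠ 0 := h
    have hpos : 0 < nv (a :: l) := by
      rw [nv_cons]
      have : 0 < a.1 * b ^ l.length := Nat.mul_pos (by omega) (Nat.pow_pos (by omega))
      omega
    have hcond : nv (a :: l) ≠ 0 ∧ ∀ d ∈ Nat.digits b (nv (a :: l)), d ∉ E := by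
      refine ⟨hpos.ne', ?_⟩
      rw [digits_nv hb a h']
      exact fun d hd => ((toStr (a :: l)).2 d hd).2
    simp only
    rw [if_pos hcond, if_neg h', nv_cons]
    have ha : (0:ℝ) < a.1 := by exact_mod_cast (by omega : 0 < a.1)
    have hx := xv_nonneg l
    unfold wt
    have hn : (nv l : ℝ) = xv l * (b:ℝ) ^ l.length := by
      unfold xv; field_simp
    push_cast
    rw [hn, ← add_mul, mul_inv, one_div, mul_comm]
  · intro n hn
    simp only [Function.mem_support, ne_eq, ite_eq_right_iff, Classical.not_imp] at hn
    obtain ⟨⟨hn0, hd⟩, -⟩ := hn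
    obtain ⟨m, hm⟩ := toStr_bij.2 ⟨Nat.digits b n, fun d hd' =>
      ⟨Nat.digits_lt_base (by omega) hd', hd d hd'⟩⟩
    have hm' := congrArg Subtype.val hm
    simp only [toStr] at hm'
    have hnv : nv m = n := by
      unfold nv; rw [hm', Nat.ofDigits_digits]
    cases m with
    | nil => exact absurd hnv.symm (by simpa [nv] using hn0)
    | cons a l =>
      refine ⟨⟨(a, l), ?_⟩, hnv⟩
      have h1 := Nat.getLast_digit_ne_zero b hn0
      have h2 : (Nat.digits b n).getLast (Nat.digits_ne_nil_iff_ne_zero.2 hn0) = a.1 := by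
        simp [← hm']
      rw [h2] at h1
      exact h1

lemma pointwise (hb : 2 ≤ b) (hEsub : ∀ d ∈ E, d < b) {x : ℝ} (hx : 0 ≤ x) :
    ∑ a ∈ Eone b E, (digamma (((a : ℝ) + x) / b) - digamma 1) =
      b * (digamma (1 + x) - digamma 1) - b * Real.log b
      - ∑ a : Dg b E, (digamma (1 + (a.1 + x) / b) - digamma 1)
      + b * ∑ a : Dg b E, (if a.1 = 0 then 0 else 1 / ((a.1 : ℝ) + x)) := by
  have hb0 : (0:ℝ) < b := by exact_mod_cast (by omega : 0 < b)
  set h : ℝ → ℝ := fun y => digamma y - digamma 1 with hh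
  set g : ℕ → ℝ := fun a => if a = 0 then h ((b + x) / b) else h ((a + x) / b) with hg
  have h1 : ∑ a ∈ Eone b E, h (((a : ℝ) + x) / b) = ∑ a ∈ E, g a := by
    have hne : ∀ s : Finset ℕ, 0 ∉ s → ∑ a ∈ s, h (((a : ℝ) + x) / b) = ∑ a ∈ s, g a := by
      intro s hs
      refine Finset.sum_congr rfl fun a ha => ?_
      have : a ≠ 0 := fun h0 => hs (h0 ▸ ha)
      simp [hg, this]
    unfold Eone
    split_ifs with h0
    · rw [Finset.sum_insert (by
        intro hbE
        exact lt_irrefl _ (hEsub b (Finset.mem_of_mem_erase hbE))),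
        hne _ (Finset.notMem_erase 0 E), ← Finset.add_sum_erase E g h0]
      simp [hg]
    · exact hne _ h0
  have h2 : ∑ a ∈ Finset.range b, g a = b * h (1 + x) - b * Real.log b := by
    have e1 := Finset.sum_range_succ (fun a : ℕ => h ((a + x) / b)) b
    rw [Finset.sum_range_succ'] at e1
    have e2 : ∑ a ∈ Finset.range b, h (((a + 1 : ℕ) + x) / b) =
        b * h (1 + x) - b * Real.log b := by
      have := dg_mul b hb (show 0 < 1 + x by linarith)
      simp only [hh, Finset.sum_sub_distrib]
      have e3 : ∀ a : ℕ, ((a + 1 : ℕ) : ℝ) + x = a + (1 + x) := by intro a; push_cast; ring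
      simp only [e3, this, Finset.sum_const, Finset.card_range, nsmul_eq_mul]
      ring
    rw [← e2]
    obtain ⟨c, rfl⟩ : ∃ c, b = c + 1 := ⟨b - 1, by omega⟩
    rw [Finset.sum_range_succ' g, Finset.sum_range_succ]
    simp [hg]
  have h3 : ∑ a ∈ E, g a = ∑ a ∈ Finset.range b, g a - ∑ a ∈ Finset.range b \ E, g a := by
    rw [← Finset.sum_sdiff (fun d hd => Finset.mem_range.2 (hEsub d hd) : E ⊆ Finset.range b)]
    ring
  have h4 : ∀ a : ℕ, g a = h (1 + (a + x) / b) - b * (if a = 0 then 0 else 1 / ((a : ℝ) + x)) := by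
    intro a
    by_cases ha : a = 0
    · simp only [hg, ha, if_true, mul_zero, sub_zero, Nat.cast_zero, zero_add]
      congr 1
      field_simp
    · have ha' : (0:ℝ) < a := by exact_mod_cast Nat.pos_of_ne_zero ha
      simp only [hg, ha, if_false, hh]
      rw [add_comm 1, dg_add_one (by positivity)]
      field_simp
      ring
  rw [h1, h3, h2, ← Finset.sum_coe_sort (Finset.range b \ E)]
  simp only [h4, Finset.sum_sub_distrib, ← Finset.mul_sum]
  simp only [hh, Finset.sum_sub_distrib]
  ring

lemma h_bdd {x : ℝ} (hx : 0 ≤ x) (hx1 : x < 1) : |digamma (1 + x) - digamma 1| ≤ 1 := by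
  have h1 := dg_mono one_pos (show 1 ≤ 1 + x by linarith)
  have h2 := dg_mono (show 0 < 1 + x by linarith) (show 1 + x ≤ 1 + 1 by linarith)
  rw [dg_add_one one_pos] at h2
  rw [abs_le]
  constructor <;> linarith

end aux

theorem kempner_digamma_formula (b : ℕ) (hb : 2 ≤ b) (E : Finset ℕ)
    (hE : E.Nonempty) (hEsub : ∀ d ∈ E, d < b) :
    kempnerSum b E = ((b : ℝ) / E.card) * Real.log b +
      (1 / (b : ℝ)) * ∫ x in Set.Ico (0 : ℝ) 1,
        (∑ a ∈ Eone b E, (digamma (((a : ℝ) + x) / b) - digamma 1))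
          ∂(kempnerMeasure b E) := by
  have hb0 : (0:ℝ) < b := by exact_mod_cast (by omega : 0 < b)
  rw [kempner_integral hb]
  have hk := kempner_sum_eq hb hE hEsub
  set h : ℝ → ℝ := fun y => digamma (1 + y) - digamma 1 with hh
  set r : List (Dg b E) → ℝ := fun l =>
    ∑ a : Dg b E, (if a.1 = 0 then 0 else 1 / ((a.1 : ℝ) + xv l)) with hr
  have hpt : ∀ l : List (Dg b E),
      wt l * ∑ a ∈ Eone b E, (digamma (((a : ℝ) + xv l) / b) - digamma 1) =
        b * (wt l * h (xv l)) - b * Real.log b * wt l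
          - b * ∑ a : Dg b E, wt (a :: l) * h (xv (a :: l)) + b * (wt l * r l) := by
    intro l
    rw [pointwise hb hEsub (xv_nonneg l)]
    simp only [wt_cons, xv_cons hb, ← Finset.mul_sum, hh, hr]
    field_simp
  have hf : Summable (fun l : List (Dg b E) => wt l * h (xv l)) :=
    bdd_summable hb hE hEsub _ 1 (fun l => h_bdd (xv_nonneg l) (xv_lt_one hb l))
  have hfa : ∀ a : Dg b E, Summable (fun l : List (Dg b E) => wt (a :: l) * h (xv (a :: l))) :=
    fun a => hf.comp_injective (List.cons_injective)
  have hw := wt_summable (E := E) hb hE hEsub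
  have hrs : Summable (fun l : List (Dg b E) => wt l * r l) := by
    refine bdd_summable hb hE hEsub _ (∑ a : Dg b E, 1) (fun l => ?_)
    refine (Finset.abs_sum_le_sum_abs _ _).trans (Finset.sum_le_sum fun a _ => ?_)
    split_ifs with h0
    · simp
    · have h1 : (1:ℝ) ≤ a.1 := by exact_mod_cast (by omega : 1 ≤ a.1)
      have h2 := xv_nonneg l
      rw [abs_of_nonneg (by positivity), div_le_one (by positivity)]
      linarith
  have hfs : Summable (fun l : List (Dg b E) => ∑ a : Dg b E, wt (a :: l) * h (xv (a :: l))) :=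
    summable_sum fun a _ => hfa a
  have key := tsum_list _ hf
  rw [← Summable.tsum_finsetSum (fun a _ => hfa a)] at key
  have h00 : h (xv ([] : List (Dg b E))) = 0 := by simp [hh, xv_nil]
  rw [h00, mul_zero, zero_add] at key
  simp only [hpt]
  rw [(((hf.mul_left _).sub (hw.mul_left _)).sub (hfs.mul_left _)).tsum_add (hrs.mul_left _),
    ((hf.mul_left _).sub (hw.mul_left _)).tsum_sub (hfs.mul_left _),
    (hf.mul_left _).tsum_sub (hw.mul_left _), tsum_mul_left, tsum_mul_left, tsum_mul_left,
    tsum_mul_left, ← key, wt_tsum hb hE hEsub, ← hk]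
  field_simp
  ring
end

section
/- Let b ≥ 2 be an integer and E a nonempty set of base-b digits. If E ≠ {0}, then K(b,E) < (b/#E)·log(b); whereas for the sole exception E = {0} one has K(b,{0}) > b·log(b). -/
open MeasureTheory Real ENNReal

/-- `ζ(s) = ∑_{k ≥ 1} k⁻ˢ`. -/
noncomputable def zetaVal (s : ℕ) : ℝ := ∑' k : ℕ, (((k : ℝ) + 1) ^ s)⁻¹

/-- `v_m(d) = ∫_{[0,1)} (d - x)^m dμ_{b,E}(x)`. -/
noncomputable def vMoment (b : ℕ) (E : Finset ℕ) (m : ℕ) (d : ℝ) : ℝ :=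
  ∫ x in Set.Ico (0 : ℝ) 1, (d - x) ^ m ∂(kempnerMeasure b E)


open Finset Filter Topology

noncomputable def kI (b : ℕ) (A : Finset ℕ) : ℕ → (ℝ → ℝ) → ℝ
  | 0, φ => φ 0
  | l + 1, φ => (1 / (b : ℝ)) * ∑ a ∈ A, kI b A l (fun x => φ (((a : ℝ) + x) / b))

lemma kI_mono (b : ℕ) (A : Finset ℕ) (hA : ∀ a ∈ A, a < b) (l : ℕ) :
    ∀ φ ψ : ℝ → ℝ, (∀ x, 0 ≤ x → x ≤ 1 → φ x ≤ ψ x) → kI b A l φ ≤ kI b A l ψ := by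
  induction l with
  | zero => intro φ ψ h; exact h 0 le_rfl zero_le_one
  | succ l ih =>
    intro φ ψ h
    simp only [kI]
    refine mul_le_mul_of_nonneg_left ?_ (by positivity)
    refine Finset.sum_le_sum fun a ha => ih _ _ fun x hx0 hx1 => ?_
    have hab : (a : ℝ) + 1 ≤ b := by exact_mod_cast hA a ha
    have hb : (0 : ℝ) < b := by have : (0 : ℝ) ≤ a := by positivity
                                linarith
    apply h
    · positivity
    · rw [div_le_one hb]; linarith

lemma kI_lin (b : ℕ) (A : Finset ℕ) (l : ℕ) :
    ∀ (φ ψ : ℝ → ℝ) (c d : ℝ), kI b A l (fun x => c * φ x + d * ψ x)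
      = c * kI b A l φ + d * kI b A l ψ := by
  induction l with
  | zero => intro φ ψ c d; rfl
  | succ l ih =>
    intro φ ψ c d
    simp only [kI]
    simp only [fun a : ℕ => ih (fun x => φ (((a : ℝ) + x) / b)) (fun x => ψ (((a : ℝ) + x) / b)) c d]
    rw [Finset.sum_add_distrib, ← Finset.mul_sum, ← Finset.mul_sum]
    ring

lemma kI_smul (b : ℕ) (A : Finset ℕ) (l : ℕ) (φ : ℝ → ℝ) (c : ℝ) :
    kI b A l (fun x => c * φ x) = c * kI b A l φ := by
  have := kI_lin b A l φ φ c 0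
  simpa using this

lemma kI_one (b : ℕ) (A : Finset ℕ) (l : ℕ) :
    kI b A l (fun _ => 1) = ((A.card : ℝ) / b) ^ l := by
  induction l with
  | zero => simp [kI]
  | succ l ih => simp only [kI, ih, Finset.sum_const, nsmul_eq_mul, pow_succ]; ring

lemma kI_const (b : ℕ) (A : Finset ℕ) (l : ℕ) (c : ℝ) :
    kI b A l (fun _ => c) = c * ((A.card : ℝ) / b) ^ l := by
  have := kI_smul b A l (fun _ => 1) c
  simpa [kI_one] using this

lemma kI_id_succ (b : ℕ) (A : Finset ℕ) (l : ℕ) :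
    kI b A (l + 1) (fun x => x) = (1 / (b : ℝ)) ^ 2 * ((∑ a ∈ A, (a : ℝ)) * ((A.card : ℝ) / b) ^ l
      + A.card * kI b A l (fun x => x)) := by
  simp only [kI]
  have h : ∀ a : ℕ, kI b A l (fun x => ((a : ℝ) + x) / b)
      = (a / b : ℝ) * ((A.card : ℝ) / b) ^ l + (1 / b) * kI b A l (fun x => x) := by
    intro a
    have := kI_lin b A l (fun _ => 1) (fun x => x) (a / b) (1 / b)
    rw [kI_one] at this
    rw [← this]
    congr 1; ext x; ring
  simp only [h, Finset.sum_add_distrib, Finset.sum_const, nsmul_eq_mul, ← Finset.sum_mul,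
    ← Finset.sum_div]
  ring

noncomputable def kU (b : ℕ) (A : Finset ℕ) (l n : ℕ) : ℝ :=
  kI b A l (fun x => 1 / ((n : ℝ) + x))

lemma kU_zero (b : ℕ) (A : Finset ℕ) (n : ℕ) : kU b A 0 n = 1 / (n : ℝ) := by
  simp [kU, kI]

lemma kU_succ (b : ℕ) (hb : 2 ≤ b) (A : Finset ℕ) (l n : ℕ) :
    kU b A (l + 1) n = ∑ a ∈ A, kU b A l (b * n + a) := by
  simp only [kU, kI, Finset.mul_sum]
  refine Finset.sum_congr rfl fun a _ => ?_
  rw [← kI_smul]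
  congr 1; ext x
  have : (b : ℝ) ≠ 0 := by positivity
  rw [one_div_mul_one_div]
  congr 1
  push_cast
  field_simp
  ring

lemma kU_le (b : ℕ) (A : Finset ℕ) (hA : ∀ a ∈ A, a < b) (l n : ℕ) (hn : 1 ≤ n) :
    kU b A l n ≤ 1 / (n : ℝ) * ((A.card : ℝ) / b) ^ l := by
  rw [← kI_const]
  refine kI_mono b A hA l _ _ fun x h0 _ => ?_
  have : (0 : ℝ) < n := by positivity
  exact one_div_le_one_div_of_le this (by linarith)

lemma kU_ge (b : ℕ) (A : Finset ℕ) (hA : ∀ a ∈ A, a < b) (l n : ℕ) (hn : 1 ≤ n) :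
    1 / ((n : ℝ) + 1) * ((A.card : ℝ) / b) ^ l ≤ kU b A l n := by
  rw [← kI_const]
  refine kI_mono b A hA l _ _ fun x h0 _ => ?_
  have : (0 : ℝ) < n := by positivity
  exact one_div_le_one_div_of_le (by linarith) (by linarith)

lemma kU_anti (b : ℕ) (A : Finset ℕ) (hA : ∀ a ∈ A, a < b) (l m n : ℕ) (hn : 1 ≤ m) (h : m ≤ n) :
    kU b A l n ≤ kU b A l m := by
  refine kI_mono b A hA l _ _ fun x h0 _ => ?_
  have : (0 : ℝ) < m := by positivity
  have h' : (m : ℝ) ≤ n := by exact_mod_cast h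
  exact one_div_le_one_div_of_le (by linarith) (by linarith)

lemma kU_pair (b : ℕ) (A : Finset ℕ) (hA : ∀ a ∈ A, a < b) (l n : ℕ) (hn : 1 ≤ n) :
    2 / ((n : ℝ) + 1) * ((A.card : ℝ) / b) ^ l + 1 / (((n : ℝ) + 1 / 2) * (n + 3 / 2)) *
      (((A.card : ℝ) / b) ^ l - 2 * kI b A l (fun x => x)) ≤ kU b A l n + kU b A l (n + 1) := by
  have e1 := kI_lin b A l (fun x => 1 / ((n : ℝ) + x)) (fun x => 1 / (((n + 1 : ℕ) : ℝ) + x)) 1 1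
  have e2 := kI_lin b A l (fun _ => 1) (fun x => x)
    (2 / ((n : ℝ) + 1) + 1 / (((n : ℝ) + 1 / 2) * (n + 3 / 2)))
    (-(2 * (1 / (((n : ℝ) + 1 / 2) * (n + 3 / 2)))))
  rw [kI_one] at e2
  have : kU b A l n + kU b A l (n + 1) = 1 * kU b A l n + 1 * kU b A l (n + 1) := by ring
  rw [this]
  unfold kU
  rw [← e1]
  refine le_trans (le_of_eq ?_) (le_trans (le_of_eq e2.symm) ?_)
  · ring
  refine kI_mono b A hA l _ _ fun x h0 h1 => ?_
  have hn' : (1 : ℝ) ≤ n := by exact_mod_cast hn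
  push_cast
  clear e1 e2 this
  generalize (n : ℝ) = y at *
  rw [← sub_nonneg]
  have hp : 0 < y + x := by linarith
  have hq : 0 < y + 1 + x := by linarith
  have h1x : 0 ≤ 1 - x := by linarith
  have key : 1 * (1 / (y + x)) + 1 * (1 / (y + 1 + x)) -
      ((2 / (y + 1) + 1 / ((y + 1 / 2) * (y + 3 / 2))) * 1 +
        -(2 * (1 / ((y + 1 / 2) * (y + 3 / 2)))) * x) =
      2 * x * (1 - x) / ((y + 1) * ((y + x) * (y + 1 + x))) +
      (1 - 2 * x) ^ 2 / 2 * (2 * y + 3 / 2 + x) /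
        (((y + x) * (y + 1 + x)) * ((y + 1 / 2) * (y + 3 / 2))) := by
    have h1 : y + 1 ≠ 0 := by linarith
    have h2 : y + 1 / 2 ≠ 0 := by linarith
    have h3 : y + 3 / 2 ≠ 0 := by linarith
    have h4 := hp.ne'
    have h5 := hq.ne'
    have h6 : 2 * y + 1 ≠ 0 := by linarith
    have h7 : 2 * y + 3 ≠ 0 := by linarith
    field_simp
    ring
  rw [key]
  have : 0 < y := by linarith
  positivity

/-- total -/
noncomputable def kT (b : ℕ) (A : Finset ℕ) (n : ℕ) : ℝ := ∑' l, kU b A l n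

lemma k_ratio {b : ℕ} {A : Finset ℕ} (hN : A.card < b) :
    0 ≤ (A.card : ℝ) / b ∧ (A.card : ℝ) / b < 1 := by
  have : (0 : ℝ) < b := by exact_mod_cast (Nat.zero_le _).trans_lt hN
  refine ⟨by positivity, ?_⟩
  rw [div_lt_one this]; exact_mod_cast hN

/-- mass -/
noncomputable def kM (b : ℕ) (A : Finset ℕ) : ℝ := (1 - (A.card : ℝ) / b)⁻¹

lemma kM_pos {b : ℕ} {A : Finset ℕ} (hN : A.card < b) : 0 < kM b A := by
  have := (k_ratio hN).2
  exact inv_pos.2 (by linarith)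

lemma kM_eq {b : ℕ} {A : Finset ℕ} (hN : A.card < b) :
    kM b A = 1 + (A.card : ℝ) / b * kM b A := by
  have := (k_ratio hN).2
  have : 1 - (A.card : ℝ) / b ≠ 0 := by linarith
  have h : (1 - (A.card : ℝ) / b) * kM b A = 1 := mul_inv_cancel₀ this
  linarith

lemma k_hasSum {b : ℕ} {A : Finset ℕ} (hN : A.card < b) :
    HasSum (fun l => ((A.card : ℝ) / b) ^ l) (kM b A) :=
  hasSum_geometric_of_lt_one (k_ratio hN).1 (k_ratio hN).2

lemma kU_nonneg (b : ℕ) (A : Finset ℕ) (hA : ∀ a ∈ A, a < b) (l n : ℕ) (hn : 1 ≤ n) :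
    0 ≤ kU b A l n := le_trans (by positivity) (kU_ge b A hA l n hn)

lemma kU_summable (b : ℕ) (A : Finset ℕ) (hA : ∀ a ∈ A, a < b) (hN : A.card < b)
    (n : ℕ) (hn : 1 ≤ n) : Summable (fun l => kU b A l n) :=
  Summable.of_nonneg_of_le (fun l => kU_nonneg b A hA l n hn) (fun l => kU_le b A hA l n hn)
    ((k_hasSum hN).summable.mul_left _)

lemma kT_rec (b : ℕ) (hb : 2 ≤ b) (A : Finset ℕ) (hA : ∀ a ∈ A, a < b) (hN : A.card < b)
    (n : ℕ) (hn : 1 ≤ n) : kT b A n = 1 / (n : ℝ) + ∑ a ∈ A, kT b A (b * n + a) := by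
  unfold kT
  rw [(kU_summable b A hA hN n hn).tsum_eq_zero_add, kU_zero]
  congr 1
  simp only [kU_succ b hb]
  refine Summable.tsum_finsetSum fun a _ => kU_summable b A hA hN _ ?_
  nlinarith

lemma kT_le (b : ℕ) (A : Finset ℕ) (hA : ∀ a ∈ A, a < b) (hN : A.card < b)
    (n : ℕ) (hn : 1 ≤ n) : kT b A n ≤ kM b A / n := by
  have := hasSum_le (fun l => kU_le b A hA l n hn) (kU_summable b A hA hN n hn).hasSum
    ((k_hasSum hN).mul_left _)
  unfold kT
  calc _ ≤ _ := this
    _ = _ := by ring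

lemma kT_ge (b : ℕ) (A : Finset ℕ) (hA : ∀ a ∈ A, a < b) (hN : A.card < b)
    (n : ℕ) (hn : 1 ≤ n) : kM b A / ((n : ℝ) + 1) ≤ kT b A n := by
  have := hasSum_le (fun l => kU_ge b A hA l n hn) ((k_hasSum hN).mul_left _)
    (kU_summable b A hA hN n hn).hasSum
  unfold kT
  calc _ = _ := by ring
    _ ≤ _ := this

lemma kT_anti (b : ℕ) (A : Finset ℕ) (hA : ∀ a ∈ A, a < b) (hN : A.card < b)
    (m n : ℕ) (hm : 1 ≤ m) (h : m ≤ n) : kT b A n ≤ kT b A m :=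
  hasSum_le (fun l => kU_anti b A hA l m n hm h) (kU_summable b A hA hN n (hm.trans h)).hasSum
    (kU_summable b A hA hN m hm).hasSum

lemma kT_gt (b : ℕ) (hb : 2 ≤ b) (A : Finset ℕ) (hA : ∀ a ∈ A, a < b) (hN : A.card < b)
    (n : ℕ) (hn : 1 ≤ n) : kM b A / ((n : ℝ) + 1) < kT b A n := by
  rw [kT_rec b hb A hA hN n hn]
  have h1 : (1 : ℝ) / (n + 1) < 1 / n :=
    one_div_lt_one_div_of_lt (by positivity) (by linarith)
  have h2 : ∑ a ∈ A, kM b A / ((b : ℝ) * (n + 1)) ≤ ∑ a ∈ A, kT b A (b * n + a) := by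
    refine Finset.sum_le_sum fun a ha => le_trans ?_ (kT_ge b A hA hN _ (by nlinarith))
    have : (a : ℝ) + 1 ≤ b := by exact_mod_cast hA a ha
    refine div_le_div_of_nonneg_left (kM_pos hN).le (by positivity) ?_
    push_cast; linarith
  have h3 : kM b A / ((n : ℝ) + 1) = 1 / (n + 1) + ∑ a ∈ A, kM b A / ((b : ℝ) * (n + 1)) := by
    rw [Finset.sum_const, nsmul_eq_mul]
    have hb' : (b : ℝ) ≠ 0 := by positivity
    have hn' : (n : ℝ) + 1 ≠ 0 := by positivity
    have := kM_eq hN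
    field_simp
    field_simp at this
    linarith
  linarith

lemma kT_pair (b : ℕ) (hb : 2 ≤ b) (A : Finset ℕ) (hA : ∀ a ∈ A, a < b) (hN : A.card < b)
    (n : ℕ) (hn : 1 ≤ n) : 2 * (kM b A / ((n : ℝ) + 1)) < kT b A n + kT b A (n + 1) := by
  have hb0 : (0 : ℝ) < b := by positivity
  have hs : Summable (fun l => kI b A l (fun x => x)) := by
    refine Summable.of_nonneg_of_le (fun l => ?_) (fun l => ?_) (k_hasSum hN).summable
    · have := kI_mono b A hA l (fun _ => 0) (fun x => x) (fun x h _ => h)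
      rwa [kI_const, zero_mul] at this
    · have := kI_mono b A hA l (fun x => x) (fun _ => 1) (fun x _ h => h)
      rwa [kI_one] at this
  set v := ∑' l, kI b A l (fun x => x) with hv
  have hv1 : v = (1 / (b : ℝ)) ^ 2 * ((∑ a ∈ A, (a : ℝ)) * kM b A + A.card * v) := by
    have h0 : kI b A 0 (fun x => x) = 0 := rfl
    conv_lhs => rw [hv, hs.tsum_eq_zero_add, h0, zero_add]
    simp only [kI_id_succ]
    exact ((((k_hasSum hN).mul_left _).add (hs.hasSum.mul_left _)).mul_left _).tsum_eq
  have hsum : 2 * (∑ a ∈ A, (a : ℝ)) ≤ (b : ℝ) * (b - 1) := by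
    have h1 : ∑ a ∈ A, a ≤ ∑ a ∈ range b, a :=
      Finset.sum_le_sum_of_subset fun a ha => Finset.mem_range.2 (hA a ha)
    have h2 := Finset.sum_range_id_mul_two b
    have h3 : 2 * ∑ a ∈ A, a ≤ b * (b - 1) := by omega
    have h4 : (2 * ∑ a ∈ A, (a : ℝ)) ≤ ((b * (b - 1) : ℕ) : ℝ) := by
      have := (Nat.cast_le (α := ℝ)).2 h3
      rwa [Nat.cast_mul 2, Nat.cast_sum, Nat.cast_ofNat] at this
    rwa [Nat.cast_mul, Nat.cast_sub (by omega), Nat.cast_one] at h4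
  have hM := kM_pos hN
  have hN' : (A.card : ℝ) + 1 ≤ b := by exact_mod_cast hN
  have hb2 : (2 : ℝ) ≤ b := by exact_mod_cast hb
  have hlt : 0 < kM b A - 2 * v := by
    have h5 : ((b : ℝ) ^ 2 - A.card) * v = (∑ a ∈ A, (a : ℝ)) * kM b A := by
      field_simp at hv1
      linarith
    have h6 : 0 < ((b : ℝ) ^ 2 - A.card) := by nlinarith
    have h7 : 2 * (∑ a ∈ A, (a : ℝ)) < (b : ℝ) ^ 2 - A.card := by nlinarith
    have h8 : 0 < ((b : ℝ) ^ 2 - A.card) * (kM b A - 2 * v) := by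
      have : ((b : ℝ) ^ 2 - A.card) * (kM b A - 2 * v) =
        (((b : ℝ) ^ 2 - A.card) - 2 * (∑ a ∈ A, (a : ℝ))) * kM b A := by linarith
      rw [this]
      exact mul_pos (by linarith) hM
    exact (pos_iff_pos_of_mul_pos h8).1 h6
  have := hasSum_le (fun l => kU_pair b A hA l n hn)
    (((k_hasSum hN).mul_left _).add
      (((k_hasSum hN).sub (hs.hasSum.mul_left 2)).mul_left _))
    ((kU_summable b A hA hN n hn).hasSum.add (kU_summable b A hA hN (n + 1) (by omega)).hasSum)
  change _ ≤ kT b A n + kT b A (n + 1) at this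
  rw [← hv] at this
  refine lt_of_lt_of_le ?_ this
  have h9 : 0 < 1 / (((n : ℝ) + 1 / 2) * (n + 3 / 2)) * (kM b A - 2 * v) := by positivity
  have h10 : 2 / ((n : ℝ) + 1) * kM b A = 2 * (kM b A / ((n : ℝ) + 1)) := by ring
  linarith

/-- blocks -/
lemma k_block (b p q : ℕ) (f : ℕ → ℝ) (h : p ≤ q) :
    ∑ n ∈ Ico (b * p) (b * q), f n = ∑ m ∈ Ico p q, ∑ d ∈ range b, f (b * m + d) := by
  induction q, h using Nat.le_induction with
  | base => simp
  | succ q hq ih =>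
    rw [Finset.sum_Ico_succ_top hq, ← ih,
      ← Finset.sum_Ico_consecutive f (Nat.mul_le_mul_left b hq) (Nat.mul_le_mul_left b (Nat.le_succ q))]
    congr 1
    rw [Finset.sum_Ico_eq_sum_range]
    congr 2
    rw [Nat.mul_succ]; omega

noncomputable def kS (b : ℕ) (A : Finset ℕ) (j : ℕ) : ℝ :=
  ∑ n ∈ Ico (b ^ j) (b ^ (j + 1)), kT b A n

lemma k_log (p q : ℕ) (hp : 1 ≤ p) (h : p ≤ q) :
    ∑ n ∈ Ico p q, 1 / ((n : ℝ) + 1) ≤ Real.log q - Real.log p ∧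
    Real.log q - Real.log p ≤ ∑ n ∈ Ico p q, 1 / (n : ℝ) ∧
    ∑ n ∈ Ico p q, 1 / (n : ℝ) - ∑ n ∈ Ico p q, 1 / ((n : ℝ) + 1) = 1 / p - 1 / q := by
  induction q, h using Nat.le_induction with
  | base => simp
  | succ q hq ih =>
    obtain ⟨h1, h2, h3⟩ := ih
    simp only [Finset.sum_Ico_succ_top hq]
    have hq0 : (0 : ℝ) < q := by exact_mod_cast hp.trans hq
    have e1 : Real.log (q + 1) - Real.log q ≤ 1 / q := by
      rw [← Real.log_div (by positivity) (by positivity)]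
      have := Real.log_le_sub_one_of_pos (x := ((q : ℝ) + 1) / q) (by positivity)
      have e : ((q : ℝ) + 1) / q - 1 = 1 / q := by field_simp; ring
      linarith
    have e2 : 1 / ((q : ℝ) + 1) ≤ Real.log (q + 1) - Real.log q := by
      have := Real.log_le_sub_one_of_pos (x := (q : ℝ) / (q + 1)) (by positivity)
      rw [Real.log_div (by positivity) (by positivity)] at this
      have e : (q : ℝ) / (q + 1) - 1 = - (1 / (q + 1)) := by field_simp; ring
      linarith
    push_cast
    refine ⟨by linarith, by linarith, by linarith⟩

lemma kS_bound (b : ℕ) (hb : 2 ≤ b) (A : Finset ℕ) (hA : ∀ a ∈ A, a < b) (hN : A.card < b)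
    (j : ℕ) : |kS b A j - kM b A * Real.log b| ≤ kM b A / b ^ j := by
  have hM := kM_pos hN
  have hp : 1 ≤ b ^ j := Nat.one_le_pow _ _ (by omega)
  have hpq : b ^ j ≤ b ^ (j + 1) := Nat.pow_le_pow_right (by omega) (by omega)
  obtain ⟨h1, h2, h3⟩ := k_log (b ^ j) (b ^ (j + 1)) hp hpq
  have hlog : Real.log ((b ^ (j + 1) : ℕ) : ℝ) - Real.log ((b ^ j : ℕ) : ℝ) = Real.log b := by
    push_cast; rw [Real.log_pow, Real.log_pow]; push_cast; ring
  rw [hlog] at h1 h2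
  have u1 : kS b A j ≤ kM b A * ∑ n ∈ Ico (b ^ j) (b ^ (j + 1)), 1 / (n : ℝ) := by
    rw [Finset.mul_sum]
    refine Finset.sum_le_sum fun n hn => (kT_le b A hA hN n ?_).trans (le_of_eq (by ring))
    exact hp.trans (Finset.mem_Ico.1 hn).1
  have u2 : kM b A * ∑ n ∈ Ico (b ^ j) (b ^ (j + 1)), 1 / ((n : ℝ) + 1) ≤ kS b A j := by
    rw [Finset.mul_sum]
    refine Finset.sum_le_sum fun n hn => le_trans (le_of_eq (by ring)) (kT_ge b A hA hN n ?_)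
    exact hp.trans (Finset.mem_Ico.1 hn).1
  have h4 : (0 : ℝ) ≤ 1 / ((b ^ (j + 1) : ℕ) : ℝ) := by positivity
  have e : kM b A / b ^ j = kM b A * (1 / ((b ^ j : ℕ) : ℝ)) := by push_cast; ring
  rw [e, abs_le]
  constructor <;> nlinarith

lemma kS_step (b : ℕ) (hb : 2 ≤ b) (A E : Finset ℕ) (hA : ∀ a ∈ A, a < b) (hN : A.card < b)
    (hdis : Disjoint A E) (hun : A ∪ E = range b) (J : ℕ) :
    kS b A 0 - kS b A J = ∑ n ∈ Ico 1 (b ^ J), (1 / (n : ℝ) - ∑ e ∈ E, kT b A (b * n + e)) := by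
  induction J with
  | zero => simp
  | succ J ih =>
    have hp : 1 ≤ b ^ J := Nat.one_le_pow _ _ (by omega)
    have hpq : b ^ J ≤ b ^ (J + 1) := Nat.pow_le_pow_right (by omega) (by omega)
    rw [← Finset.sum_Ico_consecutive _ hp hpq, ← ih]
    have h1 : kS b A (J + 1) = ∑ m ∈ Ico (b ^ J) (b ^ (J + 1)), ∑ d ∈ range b, kT b A (b * m + d) := by
      rw [← k_block _ _ _ _ hpq]
      unfold kS
      rw [pow_succ' b J, pow_succ' b (J + 1), pow_succ' b J]
    have h2 : kS b A J = ∑ m ∈ Ico (b ^ J) (b ^ (J + 1)),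
        (1 / (m : ℝ) + ∑ a ∈ A, kT b A (b * m + a)) := by
      refine Finset.sum_congr rfl fun m hm => kT_rec b hb A hA hN m ?_
      exact hp.trans (Finset.mem_Ico.1 hm).1
    have h3 : kS b A J - kS b A (J + 1) =
        ∑ n ∈ Ico (b ^ J) (b ^ (J + 1)), (1 / (n : ℝ) - ∑ e ∈ E, kT b A (b * n + e)) := by
      rw [h1, h2, ← Finset.sum_sub_distrib]
      refine Finset.sum_congr rfl fun m _ => ?_
      rw [← hun, Finset.sum_union hdis]; ring
    linarith

open Classical in
lemma kempner_eq (b : ℕ) (hb : 2 ≤ b) (A E : Finset ℕ) (hA : ∀ a ∈ A, a < b) (hN : A.card < b)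
    (hdis : Disjoint A E) (hun : A ∪ E = range b) :
    kempnerSum b E = ∑ a ∈ A.erase 0, kT b A a := by
  set g : ℕ → Prop := fun n => n ≠ 0 ∧ ∀ d ∈ Nat.digits b n, d ∉ E with hg
  have hmemA : ∀ d, d < b → (d ∉ E ↔ d ∈ A) := by
    intro d hd
    have h1 : d ∈ A ∪ E := by rw [hun]; simpa using hd
    have h2 : d ∈ A → d ∉ E := fun h => Finset.disjoint_left.1 hdis h
    rw [Finset.mem_union] at h1
    tauto
  have hstep : ∀ m d, 1 ≤ m → d < b → (g (b * m + d) ↔ g m ∧ d ∈ A) := by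
    intro m d hm hd
    have hne : b * m + d ≠ 0 := by have : 0 < b * m := by positivity
                                   omega
    simp only [hg]
    rw [add_comm, Nat.digits_add b (by omega) d m hd (Or.inr (by omega))]
    simp only [List.mem_cons, forall_eq_or_imp, ← hmemA d hd]
    have : d + b * m ≠ 0 := by omega
    have : m ≠ 0 := by omega
    tauto
  have hW : ∀ l j, ∑ n ∈ Ico (b ^ (l + 1)) (b ^ (l + 2)), (if g n then kU b A j n else 0) =
      ∑ n ∈ Ico (b ^ l) (b ^ (l + 1)), (if g n then kU b A (j + 1) n else 0) := by
    intro l j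
    have hp : 1 ≤ b ^ l := Nat.one_le_pow _ _ (by omega)
    have hpq : b ^ l ≤ b ^ (l + 1) := Nat.pow_le_pow_right (by omega) (by omega)
    have := k_block b _ _ (fun n => if g n then kU b A j n else 0) hpq
    rw [← pow_succ', ← pow_succ'] at this
    rw [this]
    refine Finset.sum_congr rfl fun m hm => ?_
    have hm1 : 1 ≤ m := hp.trans (Finset.mem_Ico.1 hm).1
    rw [← hun, Finset.sum_union hdis, kU_succ b hb]
    have hz : ∑ d ∈ E, (if g (b * m + d) then kU b A j (b * m + d) else 0) = 0 := by
      refine Finset.sum_eq_zero fun d hd => ?_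
      have hdb : d < b := by
        have : d ∈ A ∪ E := Finset.mem_union_right _ hd
        rw [hun] at this; simpa using this
      rw [if_neg]
      exact fun h => Finset.disjoint_left.1 hdis ((hstep m d hm1 hdb).1 h).2 hd
    rw [hz, add_zero]
    split_ifs with hgm
    · refine Finset.sum_congr rfl fun d hd => ?_
      rw [if_pos ((hstep m d hm1 (hA d hd)).2 ⟨hgm, hd⟩)]
    · refine Finset.sum_eq_zero fun d hd => ?_
      rw [if_neg]
      exact fun h => hgm ((hstep m d hm1 (hA d hd)).1 h).1
  have hW2 : ∀ l j, ∑ n ∈ Ico (b ^ l) (b ^ (l + 1)), (if g n then kU b A j n else 0) =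
      ∑ a ∈ A.erase 0, kU b A (j + l) a := by
    intro l
    induction l with
    | zero =>
      intro j
      rw [← Finset.sum_filter]
      refine Finset.sum_congr ?_ fun _ _ => rfl
      ext n
      simp only [Finset.mem_filter, Finset.mem_Ico, Finset.mem_erase, pow_zero, zero_add, pow_one, hg]
      constructor
      · rintro ⟨⟨h1, h2⟩, h3, h4⟩
        refine ⟨h3, (hmemA n h2).1 (h4 n ?_)⟩
        rw [Nat.digits_of_lt b n h3 h2]; simp
      · rintro ⟨h1, h2⟩
        have hn := hA n h2
        refine ⟨⟨by omega, hn⟩, h1, ?_⟩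
        rw [Nat.digits_of_lt b n h1 hn]
        simpa using (hmemA n hn).2 h2
    | succ l ih =>
      intro j
      rw [hW, ih]
      congr 1; ext; congr 1; omega
  have hpart : ∀ L, ∑ n ∈ range (b ^ L), (if g n then (n : ℝ)⁻¹ else 0) =
      ∑ l ∈ range L, ∑ a ∈ A.erase 0, kU b A l a := by
    intro L
    induction L with
    | zero => simp [hg]
    | succ L ih =>
      have hpq : b ^ L ≤ b ^ (L + 1) := Nat.pow_le_pow_right (by omega) (by omega)
      rw [Finset.sum_range_succ, ← ih, Finset.range_eq_Ico, Finset.range_eq_Ico,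
        ← Finset.sum_Ico_consecutive _ (Nat.zero_le _) hpq]
      congr 1
      have := hW2 L 0
      rw [zero_add] at this
      rw [← this]
      simp only [kU_zero, one_div]
  have hsum : HasSum (fun l => ∑ a ∈ A.erase 0, kU b A l a) (∑ a ∈ A.erase 0, kT b A a) := by
    refine hasSum_sum fun a ha => (kU_summable b A hA hN a ?_).hasSum
    have := Finset.ne_of_mem_erase ha
    omega
  have hnonneg : ∀ n : ℕ, 0 ≤ (if g n then (n : ℝ)⁻¹ else 0) := by
    intro n; split_ifs <;> positivity
  have hbnd : ∀ n, ∑ i ∈ range n, (if g i then (i : ℝ)⁻¹ else 0) ≤ ∑ a ∈ A.erase 0, kT b A a := by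
    intro n
    have h1 : n ≤ b ^ n := (Nat.lt_pow_self (by omega)).le
    refine le_trans (Finset.sum_le_sum_of_subset_of_nonneg
      (Finset.range_subset_range.2 h1) fun i _ _ => hnonneg i) ?_
    rw [hpart]
    refine sum_le_hasSum _ (fun l _ => Finset.sum_nonneg fun a ha => kU_nonneg b A hA l a ?_) hsum
    have := Finset.ne_of_mem_erase ha
    omega
  have hS := summable_of_sum_range_le hnonneg hbnd
  have ht1 := hS.hasSum.tendsto_sum_nat.comp (tendsto_pow_atTop_atTop_of_one_lt (r := b) (by omega))
  have ht2 := hsum.tendsto_sum_nat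
  have := tendsto_nhds_unique (ht1.congr hpart) ht2
  rw [← this]
  unfold kempnerSum
  congr 1

/-- limit helper -/
lemma k_lim (b : ℕ) (hb : 2 ≤ b) (c M : ℝ) (h : ∀ J : ℕ, c ≤ M / (b : ℝ) ^ (J + 1)) : c ≤ 0 := by
  have h1 : Tendsto (fun J : ℕ => (b : ℝ) ^ (J + 1)) atTop atTop :=
    (tendsto_pow_atTop_atTop_of_one_lt (by exact_mod_cast hb : (1 : ℝ) < b)).comp
      (tendsto_add_atTop_nat 1)
  have h2 := h1.const_div_atTop M
  exact ge_of_tendsto' h2 h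

lemma k_zero_case (b : ℕ) (hb : 2 ≤ b) : kempnerSum b {0} > (b : ℝ) * Real.log b := by
  set A := (range b) \ {0} with hAd
  have hA : ∀ a ∈ A, a < b := fun a ha => by simp [hAd] at ha; exact ha.1
  have hA1 : ∀ a ∈ A, 1 ≤ a := fun a ha => by simp [hAd] at ha; omega
  have hsub : ({0} : Finset ℕ) ⊆ range b := by simp; omega
  have hcard : A.card = b - 1 := by
    rw [hAd, Finset.card_sdiff_of_subset hsub]; simp
  have hN : A.card < b := by omega
  have hcard' : (A.card : ℝ) = b - 1 := by
    rw [hcard, Nat.cast_sub (by omega)]; simp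
  have hb2 : (2 : ℝ) ≤ b := by exact_mod_cast hb
  have hM : kM b A = b := by
    unfold kM; rw [hcard']
    have : (b : ℝ) ≠ 0 := by positivity
    field_simp
    ring_nf
  have hdis : Disjoint A {0} := Finset.sdiff_disjoint
  have hun : A ∪ {0} = range b := Finset.sdiff_union_of_subset hsub
  have hK := kempner_eq b hb A {0} hA hN hdis hun
  have hS0 : kS b A 0 = ∑ a ∈ A.erase 0, kT b A a := by
    unfold kS
    refine Finset.sum_congr ?_ fun _ _ => rfl
    ext n; simp [hAd]; omega
  have hd : kT b A b < 1 := by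
    rw [kT_rec b hb A hA hN b (by omega)]
    have h1 : ∑ a ∈ A, kT b A (b * b + a) ≤ ∑ a ∈ A, (b : ℝ) / (b * b + 1) := by
      refine Finset.sum_le_sum fun a ha => (kT_le b A hA hN _ (by nlinarith)).trans ?_
      rw [hM]
      have : (1 : ℝ) ≤ a := by exact_mod_cast hA1 a ha
      push_cast
      exact div_le_div_of_nonneg_left (by positivity) (by positivity) (by linarith)
    rw [Finset.sum_const, nsmul_eq_mul, hcard'] at h1
    have h2 : ((b : ℝ) - 1) * (b / (b * b + 1)) < 1 - 1 / b := by
      have : (b : ℝ) / (b * b + 1) < 1 / b := by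
        rw [div_lt_div_iff₀ (by positivity) (by positivity)]; linarith
      have e : 1 - 1 / (b : ℝ) = (b - 1) * (1 / b) := by field_simp
      rw [e]
      exact mul_lt_mul_of_pos_left this (by linarith)
    linarith
  have hfin : ∀ J : ℕ, (b : ℝ) * Real.log b + (1 - kT b A b) - kempnerSum b {0} ≤ b / (b : ℝ) ^ (J + 1) := by
    intro J
    have h1 := kS_step b hb A {0} hA hN hdis hun (J + 1)
    have h2 := (abs_le.1 (kS_bound b hb A hA hN (J + 1))).1
    rw [hM] at h2
    have h3 : 1 - kT b A b ≤ ∑ n ∈ Ico 1 (b ^ (J + 1)),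
        (1 / (n : ℝ) - ∑ e ∈ {0}, kT b A (b * n + e)) := by
      have := Finset.single_le_sum (s := Ico 1 (b ^ (J + 1)))
        (f := fun n : ℕ => (1 / (n : ℝ) - ∑ e ∈ {0}, kT b A (b * n + e))) (a := 1) ?_ ?_
      · simpa using this
      · intro n hn
        have hn1 := (Finset.mem_Ico.1 hn).1
        have := kT_le b A hA hN (b * n) (by nlinarith)
        rw [hM] at this
        have e : (b : ℝ) / ((b * n : ℕ) : ℝ) = 1 / n := by
          push_cast
          have : (b : ℝ) ≠ 0 := by positivity
          field_simp
        rw [e] at this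
        simpa using this
      · simp
        omega
    rw [hK, ← hS0]
    linarith
  have := k_lim b hb _ _ hfin
  linarith

lemma k_main_case (b : ℕ) (hb : 2 ≤ b) (E : Finset ℕ)
    (hE : E.Nonempty) (hEsub : ∀ d ∈ E, d < b) (hE0 : E ≠ {0}) :
    kempnerSum b E < ((b : ℝ) / E.card) * Real.log b := by
  set A := (range b) \ E with hAd
  have hA : ∀ a ∈ A, a < b := fun a ha => by simp [hAd] at ha; exact ha.1
  have hsub : E ⊆ range b := fun d hd => by simpa using hEsub d hd
  have hk := hE.card_pos
  have hkb : E.card ≤ b := by simpa using Finset.card_le_card hsub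
  have hcard : A.card = b - E.card := by
    rw [hAd, Finset.card_sdiff_of_subset hsub]; simp
  have hN : A.card < b := by omega
  have hcard' : (A.card : ℝ) = b - E.card := by
    rw [hcard, Nat.cast_sub hkb]
  have hb0 : (0 : ℝ) < b := by positivity
  have hk0 : (0 : ℝ) < E.card := by exact_mod_cast hk
  have hM : kM b A = b / E.card := by
    unfold kM; rw [hcard']
    have : 1 - ((b : ℝ) - E.card) / b = E.card / b := by field_simp; ring
    rw [this, inv_div]
  have hdis : Disjoint A E := Finset.sdiff_disjoint
  have hun : A ∪ E = range b := Finset.sdiff_union_of_subset hsub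
  have hK := kempner_eq b hb A E hA hN hdis hun
  have hS0 : kS b A 0 = ∑ a ∈ A.erase 0, kT b A a + ∑ e ∈ E.erase 0, kT b A e := by
    rw [← Finset.sum_union (hdis.mono (Finset.erase_subset _ _) (Finset.erase_subset _ _)),
      ← Finset.erase_union_distrib, hun]
    unfold kS
    refine Finset.sum_congr ?_ fun _ _ => rfl
    ext n; simp; omega
  -- single bound
  have hsingle : ∀ n e : ℕ, e ∈ E → e ≠ 0 → 1 / ((E.card : ℝ) * (n + 1)) < kT b A (b * n + e) := by
    intro n e he he0
    refine lt_of_le_of_lt ?_ (kT_gt b hb A hA hN _ (by omega))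
    rw [hM]
    have h1 : (e : ℝ) + 1 ≤ b := by exact_mod_cast hEsub e he
    rw [div_div, div_le_div_iff₀ (by positivity) (by positivity)]
    push_cast
    have : (E.card : ℝ) * (b * n + e + 1) ≤ E.card * (b * (n + 1)) :=
      mul_le_mul_of_nonneg_left (by linarith) hk0.le
    linarith
  -- bracket
  have hR : ∀ n : ℕ, 1 / ((n : ℝ) + 1) <
      ∑ e ∈ E, kT b A (b * n + if e = 0 then b else e) := by
    intro n
    have e1 : ∀ c : ℝ, ∑ e ∈ E, c = E.card * c := fun c => by simp
    by_cases h0 : 0 ∈ E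
    · have : ∃ e ∈ E, e ≠ 0 := by
        by_contra! hcon
        exact hE0 (Finset.eq_singleton_iff_unique_mem.2 ⟨h0, hcon⟩)
      obtain ⟨e0, he0, hne⟩ := this
      have he0' : e0 ∈ E.erase 0 := Finset.mem_erase.2 ⟨hne, he0⟩
      have e2 : 1 / ((n : ℝ) + 1) = ∑ e ∈ E, 1 / ((E.card : ℝ) * (n + 1)) := by
        rw [e1]; field_simp
      rw [e2, ← Finset.add_sum_erase E _ h0, ← Finset.add_sum_erase E _ h0,
        ← Finset.add_sum_erase _ _ he0', ← Finset.add_sum_erase _ _ he0']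
      have h3 : ∑ e ∈ (E.erase 0).erase e0, 1 / ((E.card : ℝ) * (n + 1)) ≤
          ∑ e ∈ (E.erase 0).erase e0, kT b A (b * n + if e = 0 then b else e) := by
        refine Finset.sum_le_sum fun e he => ?_
        have h4 := Finset.mem_of_mem_erase he
        have h5 := Finset.ne_of_mem_erase h4
        rw [if_neg h5]
        exact (hsingle n e (Finset.mem_of_mem_erase h4) h5).le
      have hlt := hEsub e0 he0
      have h6 := kT_pair b hb A hA hN (b * n + b - 1) (by omega)
      have h7 := kT_anti b A hA hN (b * n + e0) (b * n + b - 1) (by omega) (by omega)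
      rw [Nat.sub_add_cancel (by omega)] at h6
      have h8 : ((b * n + b - 1 : ℕ) : ℝ) + 1 = b * (n + 1) := by
        rw [Nat.cast_sub (by omega)]; push_cast; ring
      have h9 : kM b A / (b * ((n : ℝ) + 1)) = 1 / ((E.card : ℝ) * (n + 1)) := by
        rw [hM]; field_simp
      rw [h8, h9] at h6
      rw [if_pos rfl, if_neg hne]
      linarith
    · have e2 : 1 / ((n : ℝ) + 1) = ∑ e ∈ E, 1 / ((E.card : ℝ) * (n + 1)) := by
        rw [e1]; field_simp
      rw [e2]
      refine Finset.sum_lt_sum_of_nonempty hE fun e he => ?_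
      have : e ≠ 0 := fun h => h0 (h ▸ he)
      rw [if_neg this]
      exact hsingle n e he this
  -- regrouping
  have hre : ∀ Q : ℕ, 1 ≤ Q → ∑ n ∈ range Q, (1 / ((n : ℝ) + 1) -
      ∑ e ∈ E, kT b A (b * n + if e = 0 then b else e)) ≥
      ∑ n ∈ Ico 1 Q, (1 / (n : ℝ) - ∑ e ∈ E, kT b A (b * n + e)) - ∑ e ∈ E.erase 0, kT b A e := by
    intro Q hQ
    have hTQ : kT b A (b * Q) ≤ 1 / Q := by
      refine (kT_le b A hA hN _ (by nlinarith)).trans ?_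
      rw [hM]
      push_cast
      rw [div_div, div_le_div_iff₀ (by positivity) (by positivity)]
      have : (1 : ℝ) ≤ E.card := by exact_mod_cast hk
      have h2 : (0 : ℝ) < b * Q := by positivity
      nlinarith
    have hind : ∀ Q : ℕ, 1 ≤ Q → ∑ n ∈ range Q, (1 / ((n : ℝ) + 1) -
      ∑ e ∈ E, kT b A (b * n + if e = 0 then b else e)) =
      ∑ n ∈ Ico 1 Q, (1 / (n : ℝ) - ∑ e ∈ E, kT b A (b * n + e)) - ∑ e ∈ E.erase 0, kT b A e
        + (1 / Q - if 0 ∈ E then kT b A (b * Q) else 0) := by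
      intro Q hQ
      induction Q, hQ using Nat.le_induction with
      | base =>
        by_cases h0 : 0 ∈ E
        · rw [Finset.sum_range_one, ← Finset.add_sum_erase E _ h0, if_pos h0]
          have : ∑ e ∈ E.erase 0, kT b A (b * 0 + if e = 0 then b else e) =
              ∑ e ∈ E.erase 0, kT b A e := by
            refine Finset.sum_congr rfl fun e he => ?_
            rw [if_neg (Finset.ne_of_mem_erase he)]; simp
          rw [this]; simp; ring
        · rw [Finset.sum_range_one, if_neg h0, Finset.erase_eq_of_notMem h0]
          have : ∑ e ∈ E, kT b A (b * 0 + if e = 0 then b else e) =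
              ∑ e ∈ E, kT b A e := by
            refine Finset.sum_congr rfl fun e he => ?_
            rw [if_neg (fun h : e = 0 => h0 (h ▸ he))]; simp
          rw [this]; simp; ring
      | succ Q hQ ih =>
        rw [Finset.sum_range_succ, ih, Finset.sum_Ico_succ_top hQ]
        by_cases h0 : 0 ∈ E
        · rw [if_pos h0, if_pos h0, ← Finset.add_sum_erase E _ h0, ← Finset.add_sum_erase E _ h0]
          have : ∑ e ∈ E.erase 0, kT b A (b * Q + if e = 0 then b else e) =
              ∑ e ∈ E.erase 0, kT b A (b * Q + e) := by
            refine Finset.sum_congr rfl fun e he => ?_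
            rw [if_neg (Finset.ne_of_mem_erase he)]
          rw [this, if_pos rfl, Nat.mul_succ]
          push_cast
          ring_nf
        · rw [if_neg h0, if_neg h0]
          have : ∑ e ∈ E, kT b A (b * Q + if e = 0 then b else e) =
              ∑ e ∈ E, kT b A (b * Q + e) := by
            refine Finset.sum_congr rfl fun e he => ?_
            rw [if_neg (fun h : e = 0 => h0 (h ▸ he))]
          rw [this]
          push_cast
          ring
    rw [hind Q hQ]
    have : (if 0 ∈ E then kT b A (b * Q) else 0) ≤ 1 / (Q : ℝ) := by
      split_ifs
      · exact hTQ
      · positivity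
    linarith
  set δ := ∑ e ∈ E, kT b A (b * 0 + if e = 0 then b else e) - 1 with hδ
  have hδ0 : 0 < δ := by have := hR 0; simp only [Nat.cast_zero, zero_add, div_one] at this; linarith
  have hfin : ∀ J : ℕ, kempnerSum b E + δ - (b : ℝ) / E.card * Real.log b ≤
      (b / E.card) / (b : ℝ) ^ (J + 1) := by
    intro J
    have h1 := kS_step b hb A E hA hN hdis hun (J + 1)
    have h2 := (abs_le.1 (kS_bound b hb A hA hN (J + 1))).2
    rw [hM] at h2
    have hQ : 1 ≤ b ^ (J + 1) := Nat.one_le_pow _ _ (by omega)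
    have h3 := hre _ hQ
    have h4 : δ ≤ ∑ n ∈ range (b ^ (J + 1)), (∑ e ∈ E, kT b A (b * n + if e = 0 then b else e) -
        1 / ((n : ℝ) + 1)) := by
      have := Finset.single_le_sum (s := range (b ^ (J + 1)))
        (f := fun n : ℕ => (∑ e ∈ E, kT b A (b * n + if e = 0 then b else e) -
        1 / ((n : ℝ) + 1))) (a := 0) (fun n _ => sub_nonneg.2 (hR n).le)
        (Finset.mem_range.2 (by omega))
      refine le_trans (le_of_eq ?_) this
      simp [hδ]
    rw [Finset.sum_sub_distrib] at h3 h4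
    rw [hK]
    linarith
  have := k_lim b hb _ _ hfin
  linarith

theorem kempner_lt_blogb (b : ℕ) (hb : 2 ≤ b) (E : Finset ℕ)
    (hE : E.Nonempty) (hEsub : ∀ d ∈ E, d < b) :
    (E ≠ {0} → kempnerSum b E < ((b : ℝ) / E.card) * Real.log b) ∧
    kempnerSum b {0} > (b : ℝ) * Real.log b :=
  ⟨k_main_case b hb E hE hEsub, k_zero_case b hb⟩
end

section
/- For every integer b ≥ 2 one has b·log(b) < K(b,{0}) < b·log(b) + ψ(1 + 1/b) − ψ(1) < b·log(b) + ζ(2)/b. -/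
open MeasureTheory Real ENNReal

open Filter Topology

namespace Kemp

lemma dlog (x : ℝ) (hx : 0 < x) :
    DifferentiableAt ℝ (fun y => Real.log (Real.Gamma y)) x := by
  apply DifferentiableAt.log
  · apply Real.differentiableAt_Gamma
    intro m h
    have : (0:ℝ) ≤ m := Nat.cast_nonneg m
    linarith
  · exact (Real.Gamma_pos_of_pos hx).ne'

lemma digamma_add_one (x : ℝ) (hx : 0 < x) : digamma (x + 1) = digamma x + x⁻¹ := by
  unfold digamma
  have h1 : (fun y => Real.log (Real.Gamma (y + 1))) =ᶠ[𝓝 x]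
      (fun y => Real.log (Real.Gamma y) + Real.log y) := by
    filter_upwards [eventually_gt_nhds hx] with y hy
    rw [Real.Gamma_add_one hy.ne', Real.log_mul hy.ne' (Real.Gamma_pos_of_pos hy).ne', add_comm]
  have h2 := h1.deriv_eq
  rw [deriv_comp_add_const (fun y => Real.log (Real.Gamma y)) 1 x] at h2
  rw [h2, deriv_fun_add (dlog x hx) (Real.differentiableAt_log hx.ne'), Real.deriv_log]

lemma digamma_mono : MonotoneOn digamma (Set.Ioi 0) :=
  Real.convexOn_log_Gamma.monotoneOn_deriv (fun x hx => dlog x hx)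

lemma digamma_add_nat (x : ℝ) (hx : 0 < x) (N : ℕ) :
    digamma (x + N) = digamma x + ∑ k ∈ Finset.range N, (x + k)⁻¹ := by
  induction N with
  | zero => simp
  | succ N ih =>
    rw [Finset.sum_range_succ, ← add_assoc, ← ih, ← digamma_add_one _ (by positivity)]
    push_cast
    ring_nf

/-- `F x = ψ(1+x) - ψ(1)`. -/
noncomputable def F (x : ℝ) : ℝ := digamma (1 + x) - digamma 1

/-- Partial sums of `F`. -/
noncomputable def Fp (N : ℕ) (x : ℝ) : ℝ :=
  ∑ k ∈ Finset.range N, (((k : ℝ) + 1)⁻¹ - ((k : ℝ) + 1 + x)⁻¹)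

lemma F_tendsto (x : ℝ) (h0 : 0 ≤ x) (h1 : x ≤ 1) :
    Tendsto (fun N => Fp N x) atTop (𝓝 (F x)) := by
  have key : ∀ N : ℕ, F x - Fp N x = digamma (1 + x + N) - digamma (1 + N) := by
    intro N
    rw [digamma_add_nat _ (by linarith), digamma_add_nat _ one_pos, F, Fp,
      Finset.sum_sub_distrib]
    have e1 : ∀ k : ℕ, (1 + x + (k:ℝ)) = (k:ℝ) + 1 + x := fun k => by ring
    have e2 : ∀ k : ℕ, (1 + (k:ℝ)) = (k:ℝ) + 1 := fun k => by ring
    simp only [e1, e2]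
    ring
  have lo : ∀ N : ℕ, 0 ≤ F x - Fp N x := by
    intro N
    rw [key, sub_nonneg]
    have : (0:ℝ) ≤ N := Nat.cast_nonneg N
    apply digamma_mono <;> (try simp only [Set.mem_Ioi]) <;> linarith
  have hi : ∀ N : ℕ, F x - Fp N x ≤ 1 / ((N:ℝ) + 1) := by
    intro N
    rw [key, sub_le_iff_le_add]
    have : (0:ℝ) ≤ N := Nat.cast_nonneg N
    have h := digamma_add_one (1 + N) (by linarith)
    have h' : digamma (1 + x + N) ≤ digamma (1 + N + 1) := by
      apply digamma_mono <;> (try simp only [Set.mem_Ioi]) <;> linarith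
    rw [h] at h'
    rw [one_div, add_comm (N:ℝ) 1]
    linarith
  have t : Tendsto (fun N => F x - Fp N x) atTop (𝓝 0) :=
    squeeze_zero lo hi tendsto_one_div_add_atTop_nhds_zero_nat
  have := (tendsto_const_nhds (x := F x)).sub t
  simpa using this

lemma F_zero : F 0 = 0 := by simp [F]

lemma F_mono {x y : ℝ} (h0 : 0 ≤ x) (h : x ≤ y) : F x ≤ F y := by
  unfold F
  have : digamma (1 + x) ≤ digamma (1 + y) := by
    apply digamma_mono <;> (try simp only [Set.mem_Ioi]) <;> linarith
  linarith

lemma F_nonneg {x : ℝ} (h0 : 0 ≤ x) : 0 ≤ F x := by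
  have := F_mono le_rfl h0
  rwa [F_zero] at this

lemma term_nonneg (x : ℝ) (h0 : 0 ≤ x) (k : ℕ) :
    0 ≤ ((k : ℝ) + 1)⁻¹ - ((k : ℝ) + 1 + x)⁻¹ := by
  rw [sub_nonneg]
  apply inv_anti₀ <;> [positivity; linarith]

lemma F_hasSum (x : ℝ) (h0 : 0 ≤ x) (h1 : x ≤ 1) :
    HasSum (fun k : ℕ => ((k : ℝ) + 1)⁻¹ - ((k : ℝ) + 1 + x)⁻¹) (F x) :=
  (hasSum_iff_tendsto_nat_of_nonneg (term_nonneg x h0) _).2 (F_tendsto x h0 h1)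

lemma F_pos (x : ℝ) (h0 : 0 < x) (h1 : x ≤ 1) : 0 < F x := by
  have h := (F_hasSum x h0.le h1)
  have h2 := h.summable.tsum_pos (term_nonneg x h0.le) 0 (by
    rw [sub_pos]
    apply inv_strictAnti₀ <;> simp [h0])
  rwa [h.tsum_eq] at h2

lemma F_lt_zeta (x : ℝ) (h0 : 0 < x) (h1 : x ≤ 1) : F x < zetaVal 2 * x := by
  have h := (F_hasSum x h0.le h1)
  have hs : Summable (fun k : ℕ => (((k : ℝ) + 1) ^ 2)⁻¹) := by
    have := (summable_nat_add_iff 1).2 (Real.summable_nat_pow_inv (p := 2) |>.2 one_lt_two)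
    simpa using this
  have hz := hs.hasSum.mul_right x
  have tl : ∀ k : ℕ, ((k : ℝ) + 1)⁻¹ - ((k : ℝ) + 1 + x)⁻¹ < (((k : ℝ) + 1) ^ 2)⁻¹ * x := by
    intro k
    have hk : (0:ℝ) < (k:ℝ) + 1 := by positivity
    have e : ((k : ℝ) + 1)⁻¹ - ((k : ℝ) + 1 + x)⁻¹ = x / (((k:ℝ)+1) * ((k:ℝ) + 1 + x)) := by
      field_simp
      ring
    rw [e, inv_mul_eq_div]
    apply div_lt_div_of_pos_left h0 (by positivity)
    nlinarith
  exact hasSum_lt (fun k => (tl k).le) (tl 0) h hz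

lemma block (b : ℕ) (f : ℕ → ℝ) (N : ℕ) :
    ∑ i ∈ Finset.range (b * N), f i =
      ∑ k ∈ Finset.range N, ∑ d ∈ Finset.range b, f (b * k + d) := by
  induction N with
  | zero => simp
  | succ N ih => rw [Nat.mul_succ, Finset.sum_range_add, ih, Finset.sum_range_succ]

lemma harm (c : ℕ) : Tendsto (fun N : ℕ => ((harmonic ((c + 1) * N + c) : ℚ) : ℝ) - (harmonic N : ℚ))
    atTop (𝓝 (Real.log (c + 1))) := by
  have h := Real.tendsto_harmonic_sub_log_add_one
  have hm : Tendsto (fun N : ℕ => (c + 1) * N + c) atTop atTop :=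
    tendsto_atTop_mono (fun N => by simp only [id]; nlinarith [Nat.zero_le (c * N)]) tendsto_id
  have h2 := ((h.comp hm).sub h).add_const (Real.log (c + 1))
  simp only [sub_self, zero_add] at h2
  refine h2.congr fun N => ?_
  simp only [Function.comp]
  have : ((((c + 1) * N + c : ℕ) : ℝ) + 1) = ((c:ℝ) + 1) * (N + 1) := by push_cast; ring
  rw [this, Real.log_mul (by positivity) (by positivity)]
  ring

lemma harm_eq (N : ℕ) : ((harmonic N : ℚ) : ℝ) = ∑ k ∈ Finset.range N, ((k:ℝ) + 1)⁻¹ := by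
  simp [harmonic]

lemma F_mult (c : ℕ) (x : ℝ) (h0 : 0 ≤ x) (h1 : x ≤ 1) :
    ∑ d ∈ Finset.range (c + 1), F ((x + d) / (c + 1)) =
      (c + 1) * (F x + ∑ d ∈ Finset.range c, ((d:ℝ) + 1 + x)⁻¹ - Real.log (c + 1)) := by
  have hm : Tendsto (fun N : ℕ => (c + 1) * N + c) atTop atTop :=
    tendsto_atTop_mono (fun N => by simp only [id]; nlinarith [Nat.zero_le (c * N)]) tendsto_id
  have hc : (0:ℝ) < (c:ℝ) + 1 := by positivity
  have t1 : Tendsto (fun N => ∑ d ∈ Finset.range (c + 1), Fp N ((x + d) / (c + 1))) atTop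
      (𝓝 (∑ d ∈ Finset.range (c + 1), F ((x + d) / (c + 1)))) := by
    apply tendsto_finsetSum
    intro d hd
    apply F_tendsto
    · positivity
    · rw [div_le_one hc]
      have : d ≤ c := by simpa [Nat.lt_succ_iff] using hd
      have : (d:ℝ) ≤ c := by exact_mod_cast this
      linarith
  have t2 := (((((F_tendsto x h0 h1).comp hm).add_const
    (∑ d ∈ Finset.range c, ((d:ℝ) + 1 + x)⁻¹)).sub (harm c)).const_mul ((c:ℝ) + 1))
  refine tendsto_nhds_unique t1 (t2.congr fun N => ?_)
  simp only [Function.comp, Fp, Finset.sum_sub_distrib, harm_eq]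
  have e1 : ∑ d ∈ Finset.range (c+1), ∑ k ∈ Finset.range N, ((k:ℝ) + 1 + (x + d) / (c + 1))⁻¹
      = (c + 1) * ∑ i ∈ Finset.range ((c+1) * N), ((i:ℝ) + c + 1 + x)⁻¹ := by
    rw [block, Finset.sum_comm, Finset.mul_sum]
    refine Finset.sum_congr rfl fun k _ => ?_
    rw [Finset.mul_sum]
    refine Finset.sum_congr rfl fun d _ => ?_
    push_cast
    have : (k:ℝ) + 1 + (x + d) / (c + 1) = ((((c:ℝ) + 1) * k + d) + c + 1 + x) / (c + 1) := by
      field_simp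
      ring
    rw [this, inv_div, div_eq_mul_inv]
  have e2 : ∑ i ∈ Finset.range ((c+1) * N + c), ((i:ℝ) + 1 + x)⁻¹ =
      ∑ d ∈ Finset.range c, ((d:ℝ) + 1 + x)⁻¹ +
        ∑ i ∈ Finset.range ((c+1) * N), ((i:ℝ) + c + 1 + x)⁻¹ := by
    rw [add_comm ((c+1) * N) c, Finset.sum_range_add]
    congr 1
    refine Finset.sum_congr rfl fun i _ => ?_
    push_cast
    ring_nf
  rw [e1, e2, Finset.sum_const, Finset.card_range, nsmul_eq_mul]
  push_cast
  ring

/-- Transfer operator. -/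
noncomputable def U (c : ℕ) : Module.End ℝ (ℝ → ℝ) where
  toFun f := fun x => ((c:ℝ) + 1)⁻¹ * ∑ d ∈ Finset.range c, f ((x + (d + 1)) / (c + 1))
  map_add' f g := by
    funext x
    simp [Finset.sum_add_distrib, mul_add]
  map_smul' a f := by
    funext x
    simp [← Finset.mul_sum]
    ring

/-- Digit-appending operator. -/
noncomputable def D (c : ℕ) : Module.End ℝ (ℕ → ℝ) where
  toFun f := fun n => ∑ d ∈ Finset.range c, f ((c + 1) * n + (d + 1))
  map_add' f g := by
    funext x
    simp [Finset.sum_add_distrib]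
  map_smul' a f := by
    funext x
    simp [← Finset.mul_sum]

lemma U_apply (c : ℕ) (f : ℝ → ℝ) (x : ℝ) :
    U c f x = ((c:ℝ) + 1)⁻¹ * ∑ d ∈ Finset.range c, f ((x + (d + 1)) / (c + 1)) := rfl

lemma D_apply (c : ℕ) (f : ℕ → ℝ) (n : ℕ) :
    D c f n = ∑ d ∈ Finset.range c, f ((c + 1) * n + (d + 1)) := rfl

lemma U_pow (c : ℕ) (f : ℝ → ℝ) (l : ℕ) : ∀ x : ℝ,
    (U c ^ l) f x = (((c:ℝ) + 1) ^ l)⁻¹ * (D c ^ l) (fun n => f ((n + x) / ((c:ℝ) + 1) ^ l)) 0 := by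
  induction l with
  | zero => intro x; simp
  | succ l ih =>
    intro x
    rw [pow_succ' (U c), Module.End.mul_apply, U_apply, pow_succ (D c), Module.End.mul_apply]
    simp only [ih]
    rw [← Finset.mul_sum, ← Finset.sum_apply, ← map_sum, ← mul_assoc, ← mul_inv, ← pow_succ']
    congr 1
    refine congrFun (congrArg (D c ^ l) ?_) 0
    funext n
    rw [D_apply, Finset.sum_apply]
    refine Finset.sum_congr rfl fun d _ => ?_
    congr 1
    push_cast
    have : (0:ℝ) < (c:ℝ) + 1 := by positivity
    field_simp
    ring

lemma U_pow_inv (c : ℕ) (l : ℕ) :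
    (U c ^ l) (fun x => x⁻¹) 0 = (D c ^ l) (fun n => (n:ℝ)⁻¹) 0 := by
  have hc : (0:ℝ) < ((c:ℝ) + 1) ^ l := by positivity
  rw [U_pow]
  have : (fun n : ℕ => (((n:ℝ) + 0) / ((c:ℝ) + 1) ^ l)⁻¹) =
      (((c:ℝ) + 1) ^ l) • (fun n : ℕ => (n:ℝ)⁻¹) := by
    funext n
    simp [div_eq_mul_inv]
  rw [this, map_smul, Pi.smul_apply, smul_eq_mul, ← mul_assoc, inv_mul_cancel₀ hc.ne', one_mul]

lemma U_mem (c : ℕ) {x : ℝ} (h0 : 0 ≤ x) (h1 : x ≤ 1) {d : ℕ} (hd : d ∈ Finset.range c) :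
    0 ≤ (x + (d + 1)) / ((c:ℝ) + 1) ∧ (x + (d + 1)) / ((c:ℝ) + 1) ≤ 1 := by
  have hc : (0:ℝ) < (c:ℝ) + 1 := by positivity
  refine ⟨by positivity, ?_⟩
  rw [div_le_one hc]
  have : d + 1 ≤ c := by simpa using hd
  have : (d:ℝ) + 1 ≤ c := by exact_mod_cast this
  linarith

lemma U_pow_mono (c : ℕ) (f g : ℝ → ℝ) (h : ∀ x, 0 ≤ x → x ≤ 1 → f x ≤ g x) (l : ℕ) :
    ∀ x, 0 ≤ x → x ≤ 1 → (U c ^ l) f x ≤ (U c ^ l) g x := by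
  induction l with
  | zero => simpa using h
  | succ l ih =>
    intro x h0 h1
    rw [pow_succ' (U c), Module.End.mul_apply, Module.End.mul_apply, U_apply, U_apply]
    apply mul_le_mul_of_nonneg_left _ (by positivity)
    apply Finset.sum_le_sum
    intro d hd
    obtain ⟨a1, a2⟩ := U_mem c h0 h1 hd
    exact ih _ a1 a2

lemma U_pow_const (c : ℕ) (a : ℝ) (l : ℕ) : ∀ x,
    (U c ^ l) (fun _ => a) x = ((c:ℝ) / (c + 1)) ^ l * a := by
  induction l with
  | zero => simp
  | succ l ih =>
    intro x
    rw [pow_succ' (U c), Module.End.mul_apply, U_apply]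
    simp only [ih]
    rw [Finset.sum_const, Finset.card_range, nsmul_eq_mul, pow_succ]
    ring

lemma U_inv (c : ℕ) (x : ℝ) (h0 : 0 ≤ x) (h1 : x ≤ 1) :
    U c (fun x => x⁻¹) x = ((U c F - F + (fun _ => Real.log (c + 1)) +
      ((c:ℝ) + 1)⁻¹ • (fun x => F (x / (c + 1))) : ℝ → ℝ)) x := by
  have hc : (0:ℝ) < (c:ℝ) + 1 := by positivity
  have h := F_mult c x h0 h1
  rw [Finset.sum_range_succ'] at h
  simp only [Pi.add_apply, Pi.sub_apply, Pi.smul_apply, U_apply, smul_eq_mul]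
  push_cast at h
  rw [add_zero] at h
  have e : ((c:ℝ) + 1)⁻¹ * ∑ d ∈ Finset.range c, ((x + (d + 1)) / ((c:ℝ) + 1))⁻¹ =
      ∑ d ∈ Finset.range c, ((d:ℝ) + 1 + x)⁻¹ := by
    rw [Finset.mul_sum]
    refine Finset.sum_congr rfl fun d _ => ?_
    rw [inv_div, div_eq_mul_inv, ← mul_assoc, inv_mul_cancel₀ hc.ne', one_mul, add_comm x]
  rw [e]
  have e3 : ((c:ℝ) + 1)⁻¹ * ∑ d ∈ Finset.range c, F ((x + (d + 1)) / (c + 1)) +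
      ((c:ℝ) + 1)⁻¹ * F (x / (c + 1)) =
      F x + ∑ d ∈ Finset.range c, ((d:ℝ) + 1 + x)⁻¹ - Real.log (c + 1) := by
    rw [← mul_add, h, ← mul_assoc, inv_mul_cancel₀ hc.ne', one_mul]
  linarith

lemma U_step (c l : ℕ) :
    (U c ^ (l + 1)) (fun x => x⁻¹) 0 = ((U c ^ (l + 1)) F 0 - (U c ^ l) F 0) +
      ((c:ℝ) / (c + 1)) ^ l * Real.log (c + 1) +
      ((c:ℝ) + 1)⁻¹ * (U c ^ l) (fun x => F (x / (c + 1))) 0 := by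
  rw [pow_succ (U c), Module.End.mul_apply]
  have h : (U c ^ l) (U c (fun x => x⁻¹)) 0 = (U c ^ l) ((U c F - F + (fun _ => Real.log (c + 1)) +
      ((c:ℝ) + 1)⁻¹ • (fun x => F (x / (c + 1))) : ℝ → ℝ)) 0 := by
    apply le_antisymm
    · exact U_pow_mono c _ _ (fun x h0 h1 => (U_inv c x h0 h1).le) l 0 le_rfl zero_le_one
    · exact U_pow_mono c _ _ (fun x h0 h1 => (U_inv c x h0 h1).ge) l 0 le_rfl zero_le_one
  rw [h, map_add, map_add, map_sub, map_smul]
  simp only [Pi.add_apply, Pi.sub_apply, Pi.smul_apply, smul_eq_mul, U_pow_const]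
  rfl

/-- summand of the Kempner sum, weighted. -/
noncomputable def T (b : ℕ) (φ : ℕ → ℝ) (n : ℕ) : ℝ :=
  if n ≠ 0 ∧ ∀ d ∈ Nat.digits b n, d ∉ ({0} : Finset ℕ) then φ n else 0

lemma T_block (c : ℕ) (hc : 1 ≤ c) (φ : ℕ → ℝ) (m : ℕ) :
    ∑ d ∈ Finset.range (c + 1), T (c + 1) φ ((c + 1) * m + d) =
      T (c + 1) (D c φ) m + if m = 0 then D c φ 0 else 0 := by
  rw [Finset.sum_range_succ']
  have z : T (c + 1) φ ((c + 1) * m + 0) = 0 := by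
    unfold T
    rw [if_neg]
    rintro ⟨h1, h2⟩
    have hm : m ≠ 0 := by rintro rfl; simp at h1
    rw [add_comm ((c + 1) * m), Nat.digits_add (c + 1) (by omega) 0 m (by omega) (Or.inr hm)] at h2
    simp at h2
  rw [z, add_zero]
  have hd : ∀ d ∈ Finset.range c, T (c + 1) φ ((c + 1) * m + (d + 1)) =
      if ∀ e ∈ Nat.digits (c + 1) m, e ∉ ({0} : Finset ℕ) then φ ((c + 1) * m + (d + 1)) else 0 := by
    intro d hd
    have hd' : d < c := by simpa using hd
    unfold T
    rw [add_comm ((c + 1) * m),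
      Nat.digits_add (c + 1) (by omega) (d + 1) m (by omega) (Or.inl (by omega))]
    simp
  rw [Finset.sum_congr rfl hd]
  by_cases hm : m = 0
  · subst hm
    simp [T, D_apply]
  · simp only [T, hm, if_false, add_zero, ne_eq, not_false_eq_true, true_and]
    split_ifs
    · rfl
    · simp

lemma T_sum (c : ℕ) (hc : 1 ≤ c) (L : ℕ) : ∀ φ : ℕ → ℝ,
    ∑ n ∈ Finset.range ((c + 1) ^ L), T (c + 1) φ n =
      ∑ l ∈ Finset.range L, (D c ^ (l + 1)) φ 0 := by
  induction L with
  | zero => intro φ; simp [T]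
  | succ L ih =>
    intro φ
    rw [pow_succ', block, Finset.sum_congr rfl (fun m _ => T_block c hc φ m),
      Finset.sum_add_distrib, ih, Finset.sum_range_succ' (fun l => (D c ^ (l + 1)) φ 0)]
    congr 1
    simp

/-- Main identity. -/
lemma main (c : ℕ) (hc : 1 ≤ c) :
    ∃ S : ℝ, HasSum (fun l => (U c ^ l) (fun x => F (x / (c + 1))) 0) S ∧
      kempnerSum (c + 1) {0} = (c + 1) * Real.log (c + 1) + ((c:ℝ) + 1)⁻¹ * S := by
  have hcp : (0:ℝ) < (c:ℝ) + 1 := by positivity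
  set q : ℝ := (c:ℝ) / (c + 1) with hq
  have q0 : 0 ≤ q := by positivity
  have q1 : q < 1 := by rw [hq, div_lt_one hcp]; linarith
  have hgeo : HasSum (fun l => q ^ l) ((c:ℝ) + 1) := by
    convert hasSum_geometric_of_lt_one q0 q1 using 1
    rw [hq]
    field_simp
    ring
  have lo : ∀ l, 0 ≤ (U c ^ l) (fun x => F (x / (c + 1))) 0 := by
    intro l
    have := U_pow_mono c (fun _ => 0) (fun x => F (x / (c + 1)))
      (fun x h0 _ => F_nonneg (by positivity)) l 0 le_rfl zero_le_one
    rwa [U_pow_const, mul_zero] at this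
  have hi : ∀ l, (U c ^ l) (fun x => F (x / (c + 1))) 0 ≤ q ^ l * F 1 := by
    intro l
    have := U_pow_mono c (fun x => F (x / (c + 1))) (fun _ => F 1)
      (fun x h0 h1 => F_mono (by positivity) (by
        rw [div_le_one hcp]
        have : (0:ℝ) ≤ c := by positivity
        linarith)) l 0 le_rfl zero_le_one
    rwa [U_pow_const] at this
  have hs : Summable (fun l => (U c ^ l) (fun x => F (x / (c + 1))) 0) :=
    Summable.of_nonneg_of_le lo hi (hgeo.summable.mul_right _)
  refine ⟨_, hs.hasSum, ?_⟩
  have loF : ∀ l, 0 ≤ (U c ^ l) F 0 := by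
    intro l
    have := U_pow_mono c (fun _ => 0) F
      (fun x h0 _ => F_nonneg h0) l 0 le_rfl zero_le_one
    rwa [U_pow_const, mul_zero] at this
  have hiF : ∀ l, (U c ^ l) F 0 ≤ q ^ l * F 1 := by
    intro l
    have := U_pow_mono c F (fun _ => F 1)
      (fun x h0 h1 => F_mono h0 h1) l 0 le_rfl zero_le_one
    rwa [U_pow_const] at this
  have tF : Tendsto (fun l => (U c ^ l) F 0) atTop (𝓝 0) := by
    refine squeeze_zero loF hiF ?_
    simpa using (tendsto_pow_atTop_nhds_zero_of_lt_one q0 q1).mul_const (F 1)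
  have tot : Tendsto (fun L => ∑ l ∈ Finset.range L, (U c ^ (l + 1)) (fun x => x⁻¹) 0) atTop
      (𝓝 ((c + 1) * Real.log (c + 1) +
        ((c:ℝ) + 1)⁻¹ * ∑' l, (U c ^ l) (fun x => F (x / (c + 1))) 0)) := by
    have a := (tF.add (hgeo.mul_right (Real.log (c + 1))).tendsto_sum_nat).add
      (hs.hasSum.mul_left ((c:ℝ) + 1)⁻¹).tendsto_sum_nat
    rw [zero_add] at a
    refine a.congr fun L => ?_
    rw [Finset.sum_congr rfl (fun l _ => U_step c l), Finset.sum_add_distrib,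
      Finset.sum_add_distrib, Finset.sum_range_sub (fun l => (U c ^ l) F 0)]
    simp [F_zero, hq]
  have part : ∀ L, ∑ n ∈ Finset.range ((c + 1) ^ L), T (c + 1) (fun n => (n:ℝ)⁻¹) n =
      ∑ l ∈ Finset.range L, (U c ^ (l + 1)) (fun x => x⁻¹) 0 := by
    intro L
    rw [T_sum c hc]
    exact Finset.sum_congr rfl fun l _ => (U_pow_inv c (l + 1)).symm
  have Tn : ∀ n, 0 ≤ T (c + 1) (fun n => (n:ℝ)⁻¹) n := by
    intro n
    unfold T
    split_ifs <;> positivity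
  have hpow : Tendsto (fun L : ℕ => (c + 1) ^ L) atTop atTop :=
    tendsto_pow_atTop_atTop_of_one_lt (by omega)
  have tp : Tendsto (fun L => ∑ n ∈ Finset.range ((c + 1) ^ L), T (c + 1) (fun n => (n:ℝ)⁻¹) n)
      atTop (𝓝 ((c + 1) * Real.log (c + 1) +
        ((c:ℝ) + 1)⁻¹ * ∑' l, (U c ^ l) (fun x => F (x / (c + 1))) 0)) :=
    tot.congr fun L => (part L).symm
  have mono : Monotone (fun N => ∑ n ∈ Finset.range N, T (c + 1) (fun n => (n:ℝ)⁻¹) n) :=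
    monotone_nat_of_le_succ fun N => by
      rw [Finset.sum_range_succ]
      linarith [Tn N]
  have full := (tendsto_iff_tendsto_subseq_of_monotone mono hpow).2 tp
  have hS := (hasSum_iff_tendsto_nat_of_nonneg Tn _).2 full
  exact hS.tsum_eq

end Kemp

theorem kempner_zero_digit_bounds (b : ℕ) (hb : 2 ≤ b) :
    (b : ℝ) * Real.log b < kempnerSum b {0} ∧
    kempnerSum b {0} < (b : ℝ) * Real.log b + digamma (1 + 1 / b) - digamma 1 ∧
    (b : ℝ) * Real.log b + digamma (1 + 1 / b) - digamma 1 <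
      (b : ℝ) * Real.log b + zetaVal 2 / b := by
  obtain ⟨c, rfl⟩ : ∃ c, b = c + 1 := ⟨b - 1, by omega⟩
  have hc : 1 ≤ c := by omega
  obtain ⟨S, hS, hK⟩ := Kemp.main c hc
  have hcp : (0:ℝ) < (c:ℝ) + 1 := by positivity
  have hc1 : (1:ℝ) ≤ c := by exact_mod_cast hc
  push_cast
  have hF : digamma (1 + 1 / ((c:ℝ) + 1)) - digamma 1 = Kemp.F (1 / ((c:ℝ) + 1)) := rfl
  have hpos : 0 < 1 / ((c:ℝ) + 1) := by positivity
  have hle : 1 / ((c:ℝ) + 1) ≤ 1 := by rw [div_le_one hcp]; linarith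
  have lo : ∀ l, 0 ≤ (Kemp.U c ^ l) (fun x => Kemp.F (x / (c + 1))) 0 := by
    intro l
    have := Kemp.U_pow_mono c (fun _ => 0) (fun x => Kemp.F (x / (c + 1)))
      (fun x h0 _ => Kemp.F_nonneg (by positivity)) l 0 le_rfl zero_le_one
    rwa [Kemp.U_pow_const, mul_zero] at this
  have S0 : 0 < S := by
    rw [← hS.tsum_eq]
    refine hS.summable.tsum_pos lo 1 ?_
    rw [pow_one, Kemp.U_apply]
    apply _root_.mul_pos (by positivity)
    apply Finset.sum_pos
    · intro d hd
      obtain ⟨_, a2⟩ := Kemp.U_mem c le_rfl zero_le_one hd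
      apply Kemp.F_pos
      · positivity
      · rw [div_le_one hcp]
        linarith
    · exact ⟨0, by simp; omega⟩
  have S1 : S < (c + 1) * Kemp.F (1 / ((c:ℝ) + 1)) := by
    have hgeo : HasSum (fun l : ℕ => ((c:ℝ) / (c + 1)) ^ l) ((c:ℝ) + 1) := by
      convert hasSum_geometric_of_lt_one (r := (c:ℝ) / (c + 1)) (by positivity)
        (by rw [div_lt_one hcp]; linarith) using 1
      field_simp
      ring
    refine hasSum_lt (i := 0) ?_ ?_ hS (hgeo.mul_right (Kemp.F (1 / ((c:ℝ) + 1))))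
    · intro l
      have := Kemp.U_pow_mono c (fun x => Kemp.F (x / (c + 1))) (fun _ => Kemp.F (1 / ((c:ℝ) + 1)))
        (fun x h0 h1 => Kemp.F_mono (by positivity) (by gcongr)) l 0 le_rfl zero_le_one
      rwa [Kemp.U_pow_const] at this
    · simpa [Kemp.F_zero] using Kemp.F_pos _ hpos hle
  refine ⟨?_, ?_, ?_⟩
  · rw [hK]
    have : 0 < ((c:ℝ) + 1)⁻¹ * S := by positivity
    linarith
  · rw [hK, add_sub_assoc, hF]
    have : ((c:ℝ) + 1)⁻¹ * S < Kemp.F (1 / ((c:ℝ) + 1)) := by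
      rwa [inv_mul_lt_iff₀ hcp]
    linarith
  · rw [add_sub_assoc, hF]
    have := Kemp.F_lt_zeta _ hpos hle
    rw [mul_one_div] at this
    linarith
end

section
/- Let b ≥ 2 be an integer and E = {0}. Then K(b,{0}) = b·log(b) + Σ_{m=1}^∞ (−1)^{m−1}·ζ(m+1)·u_m/b^{m+1}, where u_m = ∫_{[0,1)} x^m dμ_{b,{0}}(x); moreover the sequence (u_m)_{m≥1} is positive and strictly decreasing, so this is an alternating series with terms of decreasing absolute value. -/
open MeasureTheory Real ENNReal

/-- `u_m = ∫_{[0,1)} x^m dμ_{b,{0}}(x)`. -/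
noncomputable def uMoment (b : ℕ) (m : ℕ) : ℝ :=
  ∫ x in Set.Ico (0 : ℝ) 1, x ^ m ∂(kempnerMeasure b {0})


namespace KempnerAux

abbrev KI (b : ℕ) := {l : List ℕ // ∀ d ∈ l, d < b ∧ d ∉ ({0} : Finset ℕ)}

noncomputable def kw (b : ℕ) (X : KI b) : ℝ := ((b : ℝ) ^ X.1.length)⁻¹

noncomputable def kx (b : ℕ) (X : KI b) : ℝ :=
  ((Nat.ofDigits b X.1 : ℕ) : ℝ) / (b : ℝ) ^ X.1.length

def knil (b : ℕ) : KI b := ⟨[], by simp⟩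

def ksnoc (b : ℕ) (p : Fin (b - 1) × KI b) : KI b :=
  ⟨p.2.1 ++ [(p.1 : ℕ) + 1], by
    intro d hd
    rw [List.mem_append] at hd
    rcases hd with hd | hd
    · exact p.2.2 d hd
    · have := p.1.2
      simp at hd
      subst hd
      simp
      omega⟩

lemma ksnoc_inj (b : ℕ) : Function.Injective (ksnoc b) := by
  rintro ⟨i, X⟩ ⟨j, Y⟩ h
  have h1 := congrArg Subtype.val h
  simp only [ksnoc] at h1
  have h2 := List.append_inj' h1 rfl
  simp at h2
  ext
  · simp [h2.2]
  · simp [h2.1]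

lemma ksnoc_surj (b : ℕ) (X : KI b) (h : X ≠ knil b) : ∃ p, ksnoc b p = X := by
  obtain ⟨l, hl⟩ := X
  rcases List.eq_nil_or_concat l with rfl | ⟨L, a, rfl⟩
  · exact absurd rfl h
  · have ha := hl a (by simp)
    simp at ha
    refine ⟨(⟨a - 1, by omega⟩, ⟨L, fun d hd => hl d (by simp [hd])⟩), ?_⟩
    apply Subtype.ext
    simp [ksnoc]
    omega

lemma kw_pos (b : ℕ) (hb : 2 ≤ b) (X : KI b) : 0 < kw b X := by
  unfold kw; positivity

lemma kx_nonneg (b : ℕ) (X : KI b) : 0 ≤ kx b X := by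
  unfold kx; positivity

lemma kx_lt_one (b : ℕ) (hb : 2 ≤ b) (X : KI b) : kx b X < 1 := by
  unfold kx
  rw [div_lt_one (by positivity)]
  exact_mod_cast Nat.ofDigits_lt_base_pow_length (by omega) (fun x hx => (X.2 x hx).1)

lemma kw_nil (b : ℕ) : kw b (knil b) = 1 := by simp [kw, knil]
lemma kx_nil (b : ℕ) : kx b (knil b) = 0 := by simp [kx, knil]

lemma kw_snoc (b : ℕ) (i : Fin (b - 1)) (X : KI b) :
    kw b (ksnoc b (i, X)) = kw b X / b := by
  simp [kw, ksnoc, pow_succ, div_eq_mul_inv, mul_comm]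

lemma kx_snoc (b : ℕ) (hb : 2 ≤ b) (i : Fin (b - 1)) (X : KI b) :
    kx b (ksnoc b (i, X)) = ((i : ℝ) + 1 + kx b X) / b := by
  have : (b : ℝ) ≠ 0 := by positivity
  simp [kx, ksnoc, pow_succ, Nat.ofDigits_append]
  field_simp
  ring

lemma exists_map (b : ℕ) (l : List ℕ) : (∀ d ∈ l, d < b ∧ d ∉ ({0} : Finset ℕ)) →
    ∃ L : List (Fin (b - 1)), L.length = l.length ∧ L.map (fun i : Fin (b - 1) => i.1 + 1) = l := by
  induction l with
  | nil => intro _; exact ⟨[], by simp⟩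
  | cons a t ih =>
    intro h
    obtain ⟨L, hL, hL2⟩ := ih (fun d hd => h d (by simp [hd]))
    have ha := h a (by simp)
    simp at ha
    refine ⟨⟨a - 1, by omega⟩ :: L, by simp [hL], ?_⟩
    rw [List.map_cons, hL2]
    congr 1
    simp only
    omega

lemma summable_kw (b : ℕ) (hb : 2 ≤ b) : Summable (kw b) := by
  have hb0 : (0 : ℝ) < b := by positivity
  have h1 : Summable (fun s : (Σ n, Fin n → Fin (b - 1)) => ((b : ℝ) ^ s.1)⁻¹) := by
    rw [summable_sigma_of_nonneg (fun s => by positivity)]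
    refine ⟨fun n => (hasSum_fintype _).summable, ?_⟩
    have h3 : Summable (fun n : ℕ => (((b : ℝ) - 1) / b) ^ n) := by
      apply summable_geometric_of_lt_one
      · apply div_nonneg _ hb0.le
        have : (2 : ℝ) ≤ b := by exact_mod_cast hb
        linarith
      · rw [div_lt_one hb0]; linarith
    refine h3.congr ?_
    intro n
    rw [tsum_fintype]
    simp [Nat.cast_sub (show 1 ≤ b by omega), div_eq_mul_inv, mul_pow]
  have h2 : Summable (fun l : List (Fin (b - 1)) => ((b : ℝ) ^ l.length)⁻¹) :=
    (List.equivSigmaTuple.summable_iff).2 h1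
  choose f hf1 hf2 using fun X : KI b => exists_map b X.1 X.2
  have hinj : Function.Injective f := by
    intro X Y h
    apply Subtype.ext
    rw [← hf2 X, ← hf2 Y, h]
  refine (h2.comp_injective hinj).congr ?_
  intro X
  simp [kw, hf1]

lemma tsum_rec (b : ℕ) (f : KI b → ℝ) (hf : Summable f) :
    ∑' X, f X = f (knil b) + ∑ i : Fin (b - 1), ∑' X, f (ksnoc b (i, X)) := by
  classical
  rw [hf.tsum_eq_add_tsum_ite (knil b)]
  congr 1
  have h0 : ∀ p, ksnoc b p ≠ knil b := by
    intro p h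
    have := congrArg Subtype.val h
    simp [ksnoc, knil] at this
  rw [← (ksnoc_inj b).tsum_eq]
  · simp only [h0, if_false]
    have h2 : Summable (fun p => f (ksnoc b p)) := hf.comp_injective (ksnoc_inj b)
    rw [h2.tsum_prod, tsum_fintype]
  · intro X hX
    apply ksnoc_surj
    intro h
    simp [h] at hX

lemma tsum_kw (b : ℕ) (hb : 2 ≤ b) : ∑' X, kw b X = b := by
  have h := tsum_rec b (kw b) (summable_kw b hb)
  have hb0 : (0 : ℝ) < b := by positivity
  simp only [kw_nil, kw_snoc, tsum_div_const] at h
  simp [Nat.cast_sub (show 1 ≤ b by omega)] at h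
  field_simp at h
  linarith

noncomputable def kF (b : ℕ) (n : ℕ) : ℝ := ∑' X, kw b X / (n + kx b X)

lemma summable_kF (b : ℕ) (hb : 2 ≤ b) (n : ℕ) (hn : 1 ≤ n) :
    Summable (fun X => kw b X / (n + kx b X)) := by
  refine Summable.of_nonneg_of_le ?_ ?_ (summable_kw b hb)
  · intro X
    have := kw_pos b hb X
    have := kx_nonneg b X
    positivity
  · intro X
    have := kw_pos b hb X
    have := kx_nonneg b X
    have : (1 : ℝ) ≤ n := by exact_mod_cast hn
    apply div_le_self (by linarith) (by linarith)

lemma kF_rec (b : ℕ) (hb : 2 ≤ b) (n : ℕ) (hn : 1 ≤ n) :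
    kF b n = 1 / n + ∑ i ∈ Finset.range (b - 1), kF b (b * n + (i + 1)) := by
  have hb0 : (0 : ℝ) < b := by positivity
  have hn0 : (0 : ℝ) < n := by exact_mod_cast hn
  rw [kF, tsum_rec b _ (summable_kF b hb n hn), Finset.sum_range]
  simp only [kw_nil, kx_nil, add_zero]
  congr 1
  refine Finset.sum_congr rfl fun i _ => ?_
  unfold kF
  refine tsum_congr fun X => ?_
  rw [kw_snoc, kx_snoc b hb]
  have := kx_nonneg b X
  push_cast
  have h1 : (0 : ℝ) < b * n + (i + 1) + kx b X := by positivity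
  have h2 : (n : ℝ) + (i + 1 + kx b X) / b = (b * n + (i + 1) + kx b X) / b := by
    field_simp; ring
  rw [h2]
  field_simp

lemma kF_le (b : ℕ) (hb : 2 ≤ b) (n : ℕ) (hn : 1 ≤ n) : kF b n ≤ b * (1 / n) := by
  have hn0 : (0 : ℝ) < n := by exact_mod_cast hn
  rw [← tsum_kw b hb, ← tsum_mul_right]
  refine Summable.tsum_le_tsum ?_ (summable_kF b hb n hn) ((summable_kw b hb).mul_right _)
  intro X
  have := kw_pos b hb X
  have := kx_nonneg b X
  rw [div_eq_mul_one_div]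
  gcongr
  linarith

lemma le_kF (b : ℕ) (hb : 2 ≤ b) (n : ℕ) (hn : 1 ≤ n) : b * (1 / ((n : ℝ) + 1)) ≤ kF b n := by
  have hn0 : (0 : ℝ) < n := by exact_mod_cast hn
  rw [← tsum_kw b hb, ← tsum_mul_right]
  refine Summable.tsum_le_tsum ?_ ((summable_kw b hb).mul_right _) (summable_kF b hb n hn)
  intro X
  have := kw_pos b hb X
  have := kx_nonneg b X
  have := kx_lt_one b hb X
  rw [div_eq_mul_one_div (kw b X)]
  gcongr

/-- the Kempner sum in terms of `kF`. -/
lemma kempner_eq (b : ℕ) (hb : 2 ≤ b) :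
    kempnerSum b {0} = ∑ i ∈ Finset.range (b - 1), kF b (i + 1) := by
  have hb0 : (0 : ℝ) < b := by positivity
  let g : Fin (b - 1) × KI b → ℕ := fun p => Nat.ofDigits b (ksnoc b p).1
  have hdig : ∀ p, Nat.digits b (g p) = (ksnoc b p).1 := by
    intro p
    apply Nat.digits_ofDigits b (by omega)
    · exact fun l hl => ((ksnoc b p).2 l hl).1
    · intro h
      simpa using ((ksnoc b p).2 _ (List.getLast_mem h)).2
  have hg : Function.Injective g := by
    intro p q h
    apply ksnoc_inj b
    apply Subtype.ext
    rw [← hdig, ← hdig, h]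
  have hg0 : ∀ p, g p ≠ 0 := by
    intro p h
    have := hdig p
    rw [h] at this
    simp [ksnoc] at this
  have hval : ∀ i X, ((g (i, X) : ℕ) : ℝ)⁻¹ = kw b X / (((i + 1 : ℕ) : ℝ) + kx b X) := by
    intro i X
    have := kx_nonneg b X
    simp only [g, ksnoc, kw, kx, Nat.ofDigits_append]
    simp
    field_simp
    ring
  unfold kempnerSum
  rw [← hg.tsum_eq]
  · have h1 : ∀ p, (if g p ≠ 0 ∧ ∀ d ∈ Nat.digits b (g p), d ∉ ({0} : Finset ℕ)
        then ((g p : ℕ) : ℝ)⁻¹ else 0) = kw b p.2 / (((p.1 + 1 : ℕ) : ℝ) + kx b p.2) := by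
      rintro ⟨i, X⟩
      rw [if_pos, hval]
      refine ⟨hg0 _, ?_⟩
      rw [hdig]
      exact fun d hd => ((ksnoc b _).2 d hd).2
    simp only [h1]
    have hs : Summable (fun p : Fin (b - 1) × KI b =>
        kw b p.2 / (((p.1 + 1 : ℕ) : ℝ) + kx b p.2)) := by
      rw [summable_prod_of_nonneg]
      · constructor
        · intro i
          exact summable_kF b hb (i.1 + 1) (by omega)
        · exact (hasSum_fintype _).summable
      · intro p
        have := kw_pos b hb p.2
        have := kx_nonneg b p.2
        simp only [Pi.zero_apply]
        positivity
    rw [hs.tsum_prod, tsum_fintype, Finset.sum_range]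
    rfl
  · intro n hn
    simp only [Function.mem_support, ne_eq, ite_eq_right_iff, not_forall] at hn
    obtain ⟨⟨h0, h1⟩, -⟩ := hn
    obtain ⟨p, hp⟩ := ksnoc_surj b ⟨Nat.digits b n, fun d hd =>
      ⟨Nat.digits_lt_base (by omega) hd, h1 d hd⟩⟩ (by
        intro h
        have := congrArg Subtype.val h
        simp only [knil] at this
        exact h0 (Nat.digits_eq_nil_iff_eq_zero.1 this))
    refine ⟨p, ?_⟩
    simp only [g, hp, Nat.ofDigits_digits]

lemma block_sum (b : ℕ) (hb : 2 ≤ b) (N : ℕ) :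
    ∑ n ∈ Finset.range (b * (N + 1)), kF b n = ∑ n ∈ Finset.range b, kF b n +
      ∑ k ∈ Finset.range N, (kF b (b * (k + 1)) + kF b (k + 1) - 1 / ((k : ℝ) + 1)) := by
  induction N with
  | zero => simp
  | succ N ih =>
    rw [mul_add b (N + 1) 1, mul_one, Finset.sum_range_add, ih, Finset.sum_range_succ _ N]
    have h1 : ∑ x ∈ Finset.range b, kF b (b * (N + 1) + x) =
        ∑ x ∈ Finset.range (b - 1 + 1), kF b (b * (N + 1) + x) := by
      rw [show b - 1 + 1 = b by omega]
    rw [h1, Finset.sum_range_succ']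
    have h2 := kF_rec b hb (N + 1) (by omega)
    rw [h2]
    push_cast
    simp only [add_zero]
    ring

lemma kempner_partial (b : ℕ) (hb : 2 ≤ b) (N : ℕ) :
    kempnerSum b {0} = ∑ n ∈ Finset.Ico (N + 1) (b * (N + 1)), kF b n +
      ∑ k ∈ Finset.range N, (1 / ((k : ℝ) + 1) - kF b (b * (k + 1))) := by
  have h1 := block_sum b hb N
  have hle : N + 1 ≤ b * (N + 1) := Nat.le_mul_of_pos_left _ (by omega)
  rw [kempner_eq b hb, Finset.sum_Ico_eq_sub _ hle, h1]
  have h2 : ∑ n ∈ Finset.range b, kF b n = ∑ n ∈ Finset.range (b - 1 + 1), kF b n := by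
    rw [show b - 1 + 1 = b by omega]
  rw [h2, Finset.sum_range_succ', Finset.sum_range_succ']
  simp only [Finset.sum_add_distrib, Finset.sum_sub_distrib]
  ring

lemma harmonic_real (n : ℕ) : ((harmonic n : ℚ) : ℝ) = ∑ i ∈ Finset.range n, 1 / ((i : ℝ) + 1) := by
  simp [harmonic]

lemma tendsto_harm (b : ℕ) (hb : 2 ≤ b) : Filter.Tendsto
    (fun N : ℕ => ∑ n ∈ Finset.Ico (N + 1) (b * (N + 1)), 1 / ((n : ℝ) + 1))
    Filter.atTop (nhds (Real.log b)) := by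
  have h := Real.tendsto_harmonic_sub_log
  have hA : Filter.Tendsto (fun N : ℕ => N + 1) Filter.atTop Filter.atTop :=
    Filter.tendsto_add_atTop_nat 1
  have hB : Filter.Tendsto (fun N : ℕ => b * (N + 1)) Filter.atTop Filter.atTop :=
    Filter.tendsto_atTop_mono (fun N => Nat.le_mul_of_pos_left _ (by omega)) hA
  have h3 := ((h.comp hB).sub (h.comp hA)).add_const (Real.log b)
  simp only [sub_self, zero_add] at h3
  refine h3.congr fun N => ?_
  have hle : N + 1 ≤ b * (N + 1) := Nat.le_mul_of_pos_left _ (by omega)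
  rw [Finset.sum_Ico_eq_sub _ hle]
  simp only [Function.comp, harmonic_real]
  have hb0 : (b : ℝ) ≠ 0 := by positivity
  have hN0 : (N : ℝ) + 1 ≠ 0 := by positivity
  push_cast
  rw [Real.log_mul hb0 hN0]
  ring

lemma tendsto_block (b : ℕ) (hb : 2 ≤ b) : Filter.Tendsto
    (fun N : ℕ => ∑ n ∈ Finset.Ico (N + 1) (b * (N + 1)), kF b n)
    Filter.atTop (nhds (b * Real.log b)) := by
  have h1 := (tendsto_harm b hb).const_mul (b : ℝ)
  have h0 : Filter.Tendsto (fun N : ℕ => (b : ℝ) * (1 / ((N : ℝ) + 1))) Filter.atTop (nhds 0) := by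
    simpa using (tendsto_one_div_add_atTop_nhds_zero_nat (𝕜 := ℝ)).const_mul (b : ℝ)
  have h2 := h1.add h0
  rw [add_zero] at h2
  refine tendsto_of_tendsto_of_tendsto_of_le_of_le h1 h2 ?_ ?_
  · intro N
    simp only [Finset.mul_sum]
    refine Finset.sum_le_sum fun n hn => le_kF b hb n ?_
    rw [Finset.mem_Ico] at hn; omega
  · intro N
    have hle : N + 1 ≤ b * (N + 1) := Nat.le_mul_of_pos_left _ (by omega)
    have h4 : ∑ n ∈ Finset.Ico (N + 1) (b * (N + 1)), kF b n ≤
        ∑ n ∈ Finset.Ico (N + 1) (b * (N + 1)), b * (1 / (n : ℝ)) := by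
      refine Finset.sum_le_sum fun n hn => kF_le b hb n ?_
      rw [Finset.mem_Ico] at hn; omega
    refine h4.trans ?_
    have h5 := Finset.sum_Ico_sub (fun n : ℕ => 1 / (n : ℝ)) hle
    have h6 : ∑ n ∈ Finset.Ico (N + 1) (b * (N + 1)), 1 / (n : ℝ) =
        ∑ n ∈ Finset.Ico (N + 1) (b * (N + 1)), 1 / ((n : ℝ) + 1) +
        (1 / ((N : ℝ) + 1) - 1 / ((b * (N + 1) : ℕ) : ℝ)) := by
      rw [Finset.sum_sub_distrib] at h5
      push_cast at h5 ⊢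
      linarith
    have h7 : (0 : ℝ) ≤ 1 / ((b * (N + 1) : ℕ) : ℝ) := by positivity
    rw [← Finset.mul_sum, h6]
    beta_reduce
    rw [← mul_add]
    gcongr
    linarith

lemma hasSum_moment (b : ℕ) (hb : 2 ≤ b) (m : ℕ) :
    HasSum (fun X => kw b X * kx b X ^ m) (uMoment b m) := by
  have hc : ∀ X : KI b, ((b : ℝ≥0∞) ^ X.1.length)⁻¹ ≠ ∞ := by
    intro X
    simp
    omega
  have hr : (kempnerMeasure b {0}).restrict (Set.Ico 0 1) = kempnerMeasure b {0} := by
    apply Measure.restrict_eq_self_of_ae_mem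
    unfold kempnerMeasure
    rw [Measure.ae_sum_iff]
    intro X
    apply Measure.ae_smul_measure
    refine (ae_dirac_iff (p := fun x => x ∈ Set.Ico (0 : ℝ) 1) measurableSet_Ico).2 ?_
    exact ⟨kx_nonneg b X, kx_lt_one b hb X⟩
  unfold uMoment
  rw [hr]
  have h := hasSum_integral_sum_dirac (f := fun x : ℝ => x ^ m)
    (x := fun X : KI b => kx b X) hc ?_
  · refine h.congr_fun ?_
    intro X
    simp [kw]
  · refine Summable.of_nonneg_of_le (fun X => by positivity) ?_ (summable_kw b hb)
    intro X
    have h1 : ‖kx b X ^ m‖ ≤ 1 := by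
      rw [norm_pow, Real.norm_of_nonneg (kx_nonneg b X)]
      exact pow_le_one₀ (kx_nonneg b X) (kx_lt_one b hb X).le
    have h2 := kw_pos b hb X
    simp only [ENNReal.toReal_inv, ENNReal.toReal_pow, ENNReal.toReal_natCast]
    change kw b X * _ ≤ kw b X
    nlinarith

lemma u_eq (b : ℕ) (hb : 2 ≤ b) (m : ℕ) : uMoment b m = ∑' X, kw b X * kx b X ^ m :=
  (hasSum_moment b hb m).tsum_eq.symm

lemma u_nonneg (b : ℕ) (hb : 2 ≤ b) (m : ℕ) : 0 ≤ uMoment b m :=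
  (hasSum_moment b hb m).nonneg fun X =>
    mul_nonneg (kw_pos b hb X).le (pow_nonneg (kx_nonneg b X) m)

lemma u_le (b : ℕ) (hb : 2 ≤ b) (m : ℕ) : uMoment b m ≤ b := by
  rw [← tsum_kw b hb]
  refine hasSum_le ?_ (hasSum_moment b hb m) (summable_kw b hb).hasSum
  intro X
  exact mul_le_of_le_one_right (kw_pos b hb X).le
    (pow_le_one₀ (kx_nonneg b X) (kx_lt_one b hb X).le)

lemma kx_one (b : ℕ) (hb : 2 ≤ b) : ∃ X : KI b, 0 < kx b X := by
  refine ⟨⟨[1], ?_⟩, ?_⟩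
  · intro d hd
    simp at hd
    subst hd
    simp
    omega
  · simp [kx]
    omega

lemma u_pos (b : ℕ) (hb : 2 ≤ b) (m : ℕ) : 0 < uMoment b m := by
  obtain ⟨X, hX⟩ := kx_one b hb
  rw [u_eq b hb]
  refine (hasSum_moment b hb m).summable.tsum_pos (fun X =>
    mul_nonneg (kw_pos b hb X).le (pow_nonneg (kx_nonneg b X) m)) X ?_
  exact mul_pos (kw_pos b hb X) (pow_pos hX m)

lemma u_lt (b : ℕ) (hb : 2 ≤ b) (m : ℕ) : uMoment b (m + 1) < uMoment b m := by
  obtain ⟨X, hX⟩ := kx_one b hb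
  refine hasSum_lt (i := X) ?_ ?_ (hasSum_moment b hb (m + 1)) (hasSum_moment b hb m)
  · intro Y
    exact mul_le_mul_of_nonneg_left (pow_le_pow_of_le_one (kx_nonneg b Y)
      (kx_lt_one b hb Y).le (by omega)) (kw_pos b hb Y).le
  · have h1 := kw_pos b hb X
    have h2 := kx_lt_one b hb X
    exact mul_lt_mul_of_pos_left (pow_lt_pow_right_of_lt_one₀ hX h2 (by omega)) h1

/-- `(k, m) ↦` the general term of the double series. -/
noncomputable def kg (b : ℕ) (p : ℕ × ℕ) : ℝ :=
  (-1) ^ p.2 * uMoment b (p.2 + 1) / ((b : ℝ) * (p.1 + 1)) ^ (p.2 + 2)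

lemma pow_bound (b : ℕ) (hb : 2 ≤ b) (k m : ℕ) :
    (((b : ℝ) * (k + 1)) ^ (m + 2))⁻¹ ≤ (((k : ℝ) + 1) ^ 2)⁻¹ * (1 / 2) ^ m := by
  have hb2 : (2 : ℝ) ≤ b := by exact_mod_cast hb
  have hk : (0 : ℝ) ≤ k := by positivity
  rw [one_div, inv_pow, ← mul_inv]
  apply inv_anti₀ (by positivity)
  rw [pow_add, mul_comm]
  apply mul_le_mul
  · apply pow_le_pow_left₀ (by norm_num)
    nlinarith
  · apply pow_le_pow_left₀ (by positivity)
    nlinarith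
  · positivity
  · positivity

lemma summable_sq : Summable (fun k : ℕ => (((k : ℝ) + 1) ^ 2)⁻¹) := by
  have h := (summable_nat_add_iff 1).2 (Real.summable_nat_pow_inv.2 (show 1 < 2 by norm_num))
  simpa using h

lemma summable_kg (b : ℕ) (hb : 2 ≤ b) : Summable (kg b) := by
  have h1 : Summable (fun p : ℕ × ℕ => (b : ℝ) * ((((p.1 : ℝ) + 1) ^ 2)⁻¹ * (1 / 2) ^ p.2)) :=
    (summable_sq.mul_of_nonneg (summable_geometric_of_lt_one (by norm_num) (by norm_num))
      (fun k => by positivity) (fun k => by positivity)).mul_left _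
  refine Summable.of_norm_bounded h1 ?_
  rintro ⟨k, m⟩
  simp only [kg, norm_div, norm_mul, norm_pow, norm_neg, norm_one, one_pow, one_mul]
  rw [Real.norm_of_nonneg (u_nonneg b hb _), div_eq_mul_inv]
  refine mul_le_mul (u_le b hb _) ?_ (by positivity) (by positivity)
  have h2 := pow_bound b hb k m
  have h3 : ‖(b : ℝ)‖ * ‖(k : ℝ) + 1‖ = b * (k + 1) := by
    rw [Real.norm_of_nonneg (by positivity), Real.norm_of_nonneg (by positivity)]
  rw [h3]
  exact h2

lemma hasSum_geom (t x : ℝ) (ht : 2 ≤ t) (hx0 : 0 ≤ x) (hx1 : x < 1) :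
    HasSum (fun m : ℕ => (-1 : ℝ) ^ m * x ^ (m + 1) / t ^ (m + 2)) (1 / t - 1 / (t + x)) := by
  have h1 : |-(x / t)| < 1 := by
    rw [abs_neg, abs_of_nonneg (by positivity), div_lt_one (by linarith)]
    linarith
  have h := (hasSum_geometric_of_abs_lt_one h1).mul_left (x / t ^ 2)
  have h2 : x / t ^ 2 * (1 - -(x / t))⁻¹ = 1 / t - 1 / (t + x) := by
    have : t ≠ 0 := by linarith
    have : t + x ≠ 0 := by linarith
    have h3 : 1 - -(x / t) = (t + x) / t := by field_simp; ring
    rw [h3]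
    field_simp
    ring
  rw [h2] at h
  refine h.congr_fun ?_
  intro m
  rw [neg_pow (x / t), div_pow]
  have : t ≠ 0 := by linarith
  field_simp
  ring

/-- the sum over `m` for fixed `k`. -/
lemma hasSum_kg_row (b : ℕ) (hb : 2 ≤ b) (k : ℕ) :
    ∑' m, kg b (k, m) = 1 / ((k : ℝ) + 1) - kF b (b * (k + 1)) := by
  have hb2 : (2 : ℝ) ≤ b := by exact_mod_cast hb
  have hk : (0 : ℝ) ≤ k := by positivity
  set t : ℝ := (b : ℝ) * (k + 1) with ht
  have ht2 : 2 ≤ t := by rw [ht]; nlinarith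
  have hs : Summable (Function.uncurry fun (X : KI b) (m : ℕ) =>
      kw b X * ((-1 : ℝ) ^ m * kx b X ^ (m + 1) / t ^ (m + 2))) := by
    have h1 : Summable (fun p : KI b × ℕ => kw b p.1 * (1 / 2 : ℝ) ^ p.2) :=
      (summable_kw b hb).mul_of_nonneg
        (summable_geometric_of_lt_one (by norm_num) (by norm_num))
        (fun X => (kw_pos b hb X).le) (fun k => by positivity)
    refine Summable.of_norm_bounded h1 ?_
    rintro ⟨X, m⟩
    simp only [Function.uncurry, norm_div, norm_mul, norm_pow, norm_neg, norm_one, one_pow, one_mul]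
    rw [Real.norm_of_nonneg (kw_pos b hb X).le, Real.norm_of_nonneg (kx_nonneg b X),
      Real.norm_of_nonneg (show 0 ≤ t by linarith)]
    refine mul_le_mul_of_nonneg_left ?_ (kw_pos b hb X).le
    have h2 : kx b X ^ (m + 1) ≤ 1 := pow_le_one₀ (kx_nonneg b X) (kx_lt_one b hb X).le
    have h3 : (2 : ℝ) ^ m ≤ t ^ (m + 2) :=
      (pow_le_pow_right₀ (by norm_num) (by omega)).trans (pow_le_pow_left₀ (by norm_num) ht2 _)
    rw [one_div, inv_pow, div_eq_mul_inv]
    calc _ ≤ 1 * ((2 : ℝ) ^ m)⁻¹ := by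
          apply mul_le_mul h2 (inv_anti₀ (by positivity) h3) (by positivity) (by norm_num)
      _ = _ := one_mul _
  have h1 := hs.tsum_comm
  have h2 : ∀ m, ∑' X, kw b X * ((-1 : ℝ) ^ m * kx b X ^ (m + 1) / t ^ (m + 2)) = kg b (k, m) := by
    intro m
    rw [kg, u_eq b hb]
    simp only
    rw [← ht, mul_div_assoc, ← tsum_div_const, ← tsum_mul_left]
    refine tsum_congr fun X => ?_
    ring
  have h3 : ∀ X, ∑' m : ℕ, kw b X * ((-1 : ℝ) ^ m * kx b X ^ (m + 1) / t ^ (m + 2)) =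
      kw b X * (1 / t) - kw b X / (((b * (k + 1) : ℕ) : ℝ) + kx b X) := by
    intro X
    rw [tsum_mul_left, (hasSum_geom t _ ht2 (kx_nonneg b X) (kx_lt_one b hb X)).tsum_eq]
    push_cast
    rw [← ht]
    ring
  simp only [h2, h3] at h1
  rw [h1, Summable.tsum_sub ((summable_kw b hb).mul_right _)
    (summable_kF b hb _ (Nat.mul_pos (by omega) (by omega))), tsum_mul_right, tsum_kw b hb, kF, ht]
  congr 1
  field_simp

lemma kg_col (b : ℕ) (m : ℕ) : ∑' k, kg b (k, m) =
    (-1 : ℝ) ^ m * zetaVal (m + 2) * uMoment b (m + 1) / (b : ℝ) ^ (m + 2) := by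
  have h : ∀ k : ℕ, kg b (k, m) = ((-1 : ℝ) ^ m * uMoment b (m + 1) / (b : ℝ) ^ (m + 2)) *
      (((k : ℝ) + 1) ^ (m + 2))⁻¹ := by
    intro k
    simp only [kg, mul_pow]
    rw [div_mul_eq_div_div, ← div_eq_mul_inv]
  simp only [h]
  rw [tsum_mul_left, zetaVal]
  ring

end KempnerAux

open KempnerAux in
theorem kempner_zero_digit_series (b : ℕ) (hb : 2 ≤ b) :
    Summable (fun m : ℕ =>
      (-1 : ℝ) ^ m * zetaVal (m + 2) * uMoment b (m + 1) / (b : ℝ) ^ (m + 2)) ∧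
    kempnerSum b {0} = (b : ℝ) * Real.log b +
      ∑' m : ℕ, (-1 : ℝ) ^ m * zetaVal (m + 2) * uMoment b (m + 1) / (b : ℝ) ^ (m + 2) ∧
    (∀ m : ℕ, 1 ≤ m → 0 < uMoment b m) ∧
    (∀ m : ℕ, 1 ≤ m → uMoment b (m + 1) < uMoment b m) := by
  have hs := summable_kg b hb
  refine ⟨?_, ?_, fun m _ => u_pos b hb m, fun m _ => u_lt b hb m⟩
  · have h := hs.prod_symm.prod
    simpa only [Prod.swap_prod_mk, kg_col] using h
  · have h1 : ∑' m : ℕ, (-1 : ℝ) ^ m * zetaVal (m + 2) * uMoment b (m + 1) / (b : ℝ) ^ (m + 2) =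
        ∑' k : ℕ, (1 / ((k : ℝ) + 1) - kF b (b * (k + 1))) := by
      simp only [← kg_col, ← hasSum_kg_row b hb]
      exact Summable.tsum_comm (f := fun k m => kg b (k, m)) hs
    have h2 : Summable (fun k : ℕ => 1 / ((k : ℝ) + 1) - kF b (b * (k + 1))) := by
      have h := hs.prod
      simpa only [hasSum_kg_row b hb] using h
    rw [h1]
    refine tendsto_nhds_unique (f := fun _ : ℕ => kempnerSum b {0}) (l := Filter.atTop)
      tendsto_const_nhds ?_
    refine ((tendsto_block b hb).add h2.hasSum.tendsto_sum_nat).congr fun N => ?_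
    exact (kempner_partial b hb N).symm
end
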